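/- arXiv:2412.06467 — 4 statements merged into one kernel-verified Lean document; each statement's English description precedes it below -/
import Mathlib

section
/- Let I be an equigenerated squarefree monomial ideal in K[x_1,...,x_n], let x be a variable, and let s be a positive integer. If I^s has linear quotients, then (I^x)^s has linear quotients, where I^x is the duplicate ideal of I by x. -/
open MvPolynomial

/-- An ideal is generated by a subset of the variables. -/
def genByVars {K : Type*} [Field K] {σ : Type*} (J : Ideal (MvPolynomial σ K)) : Prop :=
  ∃ S : Set σ, J = Ideal.span ((fun i => (X i : MvPolynomial σ K)) '' S)

/-- An equigenerated monomial ideal has linear quotients: there is an ordering of a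
minimal monomial generating system (an antichain of exponent vectors) such that each
successive colon ideal is generated by variables. -/
def HasLinearQuotients {K : Type*} [Field K] {σ : Type*} (I : Ideal (MvPolynomial σ K)) : Prop :=
  ∃ (r : ℕ) (d : Fin r → (σ →₀ ℕ)),
    (∀ i j : Fin r, i ≠ j → ¬ d i ≤ d j) ∧
    Ideal.span (Set.range fun i => (monomial (d i) (1 : K))) = I ∧
    ∀ i : Fin r,
      genByVars (Submodule.colon
        (Ideal.span ((fun j => (monomial (d j) (1 : K))) '' {j | j < i}))
        (Ideal.span {(monomial (d i) (1 : K))}))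

/-!
In terms of exponents, the duplicate of `I` consists of all monomials in the variables of `I`
and `y` that become generators of `I` under `y ↦ x`; squarefreeness at `x` excludes further
mixtures `x ^ a * y ^ b`. Preimages under a map of variables commute with sumsets, so `(I^x)^s`
is the analogous preimage of `I ^ s`, and it is enough to lift linear quotients along a map of
variables with finite fibers. Order the lifted exponents first by the generator they lie over
and then lexicographically: between different generators a linear step lifts from below, and
within one fiber a lexicographic descent is achieved by exchanging one variable for another.
-/

open scoped Pointwise

section Exponents

variable {σ τ : Type*} {g : τ → σ}

lemma mapDomain_apply_eq_sum_of_support_subset {M : Type*} [AddCommMonoid M] [DecidableEq σ]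
    {w : τ →₀ M} {T : Finset τ} (hT : w.support ⊆ T) (z : σ) :
    w.mapDomain g z = ∑ o ∈ T with g o = z, w o := by
  rw [Finsupp.mapDomain, Finsupp.sum_of_support_subset w hT _ (by simp), Finsupp.finsetSum_apply,
    Finset.sum_filter]
  simp only [Finsupp.single_apply]

lemma exists_lt_of_mapDomain_lt {M : Type*} [AddCommMonoid M] [LinearOrder M]
    [IsOrderedAddMonoid M] {w w' : τ →₀ M} {z : σ} (h : w.mapDomain g z < w'.mapDomain g z) :
    ∃ o, g o = z ∧ w o < w' o := by
  classical
  rw [mapDomain_apply_eq_sum_of_support_subset Finset.subset_union_left,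
    mapDomain_apply_eq_sum_of_support_subset Finset.subset_union_right] at h
  obtain ⟨o, ho, hlt⟩ := Finset.exists_lt_of_sum_lt h
  exact ⟨o, (Finset.mem_filter.1 ho).2, hlt⟩

lemma exists_lt_of_mapDomain_eq {w w' : τ →₀ ℕ} {o : τ} (h : w.mapDomain g = w'.mapDomain g)
    (ho : w' o < w o) : ∃ p, g p = g o ∧ w p < w' p := by
  classical
  have hle : Finsupp.single o 1 ≤ w := Finsupp.single_le_iff.2 (by omega)
  have hlt : (w - Finsupp.single o 1).mapDomain g (g o) < w'.mapDomain g (g o) := by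
    rw [← h, ← tsub_add_cancel_of_le hle, Finsupp.mapDomain_add]
    simp
  obtain ⟨p, hp, hwp⟩ := exists_lt_of_mapDomain_lt hlt
  rw [Finsupp.tsub_apply, Finsupp.single_apply] at hwp
  split_ifs at hwp with hop
  · subst hop
    omega
  · exact ⟨p, hp, hwp⟩

lemma eq_of_le_of_mapDomain_eq {w w' : τ →₀ ℕ} (hle : w ≤ w')
    (h : w.mapDomain g = w'.mapDomain g) : w = w' := by
  ext o
  by_contra hne
  obtain ⟨p, -, hp⟩ := exists_lt_of_mapDomain_eq h.symm ((hle o).lt_of_ne hne)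
  exact (hle p).not_gt hp

lemma exists_le_mapDomain_eq (W : τ →₀ ℕ) {u : σ →₀ ℕ} (hu : u ≤ W.mapDomain g) :
    ∃ w ≤ W, w.mapDomain g = u := by
  classical
  induction W using Finsupp.induction_linear generalizing u with
  | zero => exact ⟨0, le_rfl, (le_antisymm hu zero_le).symm⟩
  | add a b iha ihb =>
    rw [Finsupp.mapDomain_add] at hu
    obtain ⟨w₁, hw₁, h₁⟩ := iha (inf_le_right : u ⊓ a.mapDomain g ≤ _)
    obtain ⟨w₂, hw₂, h₂⟩ := ihb (tsub_le_iff_left.2 hu)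
    refine ⟨w₁ + w₂, add_le_add hw₁ hw₂, ?_⟩
    rw [Finsupp.mapDomain_add, h₁, h₂]
    ext v
    simp only [Finsupp.add_apply, Finsupp.inf_apply, Finsupp.tsub_apply]
    omega
  | single o n =>
    rw [Finsupp.mapDomain_single] at hu
    refine ⟨Finsupp.single o (u (g o)), Finsupp.single_mono (by simpa using hu (g o)), ?_⟩
    ext z
    have hz := hu z
    rw [Finsupp.mapDomain_single]
    simp only [Finsupp.single_apply] at hz ⊢
    split_ifs at hz ⊢ with h
    · rw [h]
    · omega

lemma preimage_mapDomain_add (A B : Set (σ →₀ ℕ)) :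
    Finsupp.mapDomain g ⁻¹' (A + B) = Finsupp.mapDomain g ⁻¹' A + Finsupp.mapDomain g ⁻¹' B := by
  ext w
  simp only [Set.mem_preimage, Set.mem_add]
  constructor
  · rintro ⟨a, ha, b, hb, hab⟩
    obtain ⟨w₁, hw₁, rfl⟩ := exists_le_mapDomain_eq w (hab ▸ le_self_add : a ≤ w.mapDomain g)
    have hb' : (w - w₁).mapDomain g = b := by
      rw [← add_tsub_cancel_of_le hw₁, Finsupp.mapDomain_add] at hab
      exact (add_left_cancel hab).symm
    exact ⟨w₁, ha, w - w₁, hb' ▸ hb, add_tsub_cancel_of_le hw₁⟩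
  · rintro ⟨a, ha, b, hb, rfl⟩
    exact ⟨_, ha, _, hb, Finsupp.mapDomain_add.symm⟩

-- `s • A` is the `s`-fold sumset, not the dilate `{s • a | a ∈ A}`.
lemma preimage_mapDomain_nsmul (A : Set (σ →₀ ℕ)) (s : ℕ) :
    Finsupp.mapDomain g ⁻¹' (s • A) = s • (Finsupp.mapDomain g ⁻¹' A) := by
  induction s with
  | zero =>
    ext w
    simp only [zero_nsmul, Set.mem_preimage, Set.mem_zero,
      Finsupp.mapDomain_apply_eq_zero_iff_of_subsingletonAddUnits]
  | succ n ih => rw [succ_nsmul, succ_nsmul, preimage_mapDomain_add, ih]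

lemma coe_upperClosure_preimage_mapDomain (A : Set (σ →₀ ℕ)) :
    (upperClosure (Finsupp.mapDomain g ⁻¹' A) : Set (τ →₀ ℕ)) =
      Finsupp.mapDomain g ⁻¹' (upperClosure A : Set (σ →₀ ℕ)) := by
  ext w
  constructor
  · rintro ⟨v, hv, hvw⟩
    exact ⟨_, hv, Finsupp.mapDomain_mono hvw⟩
  · rintro ⟨a, ha, haw⟩
    obtain ⟨v, hvw, rfl⟩ := exists_le_mapDomain_eq w haw
    exact ⟨v, ha, hvw⟩

end Exponents

section MonomialIdeal

variable {σ : Type*}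

/-- The monomial ideal generated by the monomials whose exponent vectors lie in `A`. -/
noncomputable def monomialIdeal (R : Type*) [CommSemiring R] (A : Set (σ →₀ ℕ)) :
    Ideal (MvPolynomial σ R) :=
  Ideal.span ((fun a => monomial a (1 : R)) '' A)

variable {R : Type*} [CommSemiring R]

lemma monomialIdeal_range {ι : Type*} (d : ι → σ →₀ ℕ) :
    monomialIdeal R (Set.range d) = Ideal.span (Set.range fun i => monomial (d i) (1 : R)) := by
  rw [monomialIdeal, ← Set.range_comp]
  rfl

lemma monomial_mem_monomialIdeal_iff [Nontrivial R] {A : Set (σ →₀ ℕ)} {e : σ →₀ ℕ} :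
    monomial e (1 : R) ∈ monomialIdeal R A ↔ e ∈ upperClosure A := by
  classical
  simp [monomialIdeal, mem_ideal_span_monomial_image, support_monomial]

lemma monomialIdeal_le_iff [Nontrivial R] {A B : Set (σ →₀ ℕ)} :
    monomialIdeal R A ≤ monomialIdeal R B ↔ A ⊆ upperClosure B := by
  rw [monomialIdeal, Ideal.span_le, Set.image_subset_iff]
  exact forall₂_congr fun _ _ => monomial_mem_monomialIdeal_iff

lemma monomialIdeal_eq_iff [Nontrivial R] {A B : Set (σ →₀ ℕ)} :
    monomialIdeal R A = monomialIdeal R B ↔ upperClosure A = upperClosure B := by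
  rw [le_antisymm_iff, monomialIdeal_le_iff, monomialIdeal_le_iff, le_antisymm_iff,
    le_upperClosure, le_upperClosure, and_comm]

lemma monomialIdeal_preimage_mapDomain_congr [Nontrivial R] {τ : Type*} (g : τ → σ)
    {A B : Set (σ →₀ ℕ)} (h : monomialIdeal R A = monomialIdeal R B) :
    monomialIdeal R (Finsupp.mapDomain g ⁻¹' A) = monomialIdeal R (Finsupp.mapDomain g ⁻¹' B) := by
  rw [monomialIdeal_eq_iff] at h ⊢
  apply SetLike.coe_injective
  rw [coe_upperClosure_preimage_mapDomain, coe_upperClosure_preimage_mapDomain, h]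

lemma monomialIdeal_mul (A B : Set (σ →₀ ℕ)) :
    monomialIdeal R A * monomialIdeal R B = monomialIdeal R (A + B) := by
  rw [monomialIdeal, monomialIdeal, monomialIdeal, Ideal.span_mul_span']
  congr 1
  exact (Set.image_image2_distrib fun a b => by rw [monomial_mul, mul_one]).symm

lemma monomialIdeal_pow (A : Set (σ →₀ ℕ)) (s : ℕ) :
    monomialIdeal R A ^ s = monomialIdeal R (s • A) := by
  induction s with
  | zero =>
    rw [pow_zero, zero_nsmul, eq_comm, Ideal.one_eq_top, Ideal.eq_top_iff_one]
    exact Ideal.subset_span ⟨0, rfl, rfl⟩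
  | succ n ih => rw [pow_succ, ih, monomialIdeal_mul, succ_nsmul]

end MonomialIdeal

section LinearQuotients

variable {K : Type*} [Field K] {σ τ ι : Type*}

lemma genByVars_colon_monomial_iff {A : Set (σ →₀ ℕ)} {m : σ →₀ ℕ} :
    genByVars (Submodule.colon (monomialIdeal K A)
        (Ideal.span {monomial m (1 : K)} : Ideal (MvPolynomial σ K))) ↔
      ∀ b ∈ A, ∃ c ∈ A, ∃ v, c ≤ m + Finsupp.single v 1 ∧ m v < b v := by
  classical
  have monomial_mem_colon (e : σ →₀ ℕ) : monomial e (1 : K) ∈ Submodule.colon (monomialIdeal K A)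
      (Ideal.span {monomial m (1 : K)} : Ideal (MvPolynomial σ K)) ↔ ∃ c ∈ A, c ≤ m + e := by
    rw [Ideal.mem_colon_span_singleton, monomial_mul, mul_one, monomial_mem_monomialIdeal_iff,
      mem_upperClosure, add_comm]
  constructor
  · rintro ⟨S, hS⟩ b hb
    have hbm : monomial (b - m) (1 : K) ∈ Ideal.span ((fun i => X i) '' S) :=
      hS ▸ (monomial_mem_colon _).2 ⟨b, hb, le_add_tsub⟩
    rw [mem_ideal_span_X_image] at hbm
    obtain ⟨v, hvS, hv⟩ := hbm (b - m) (by simp [support_monomial])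
    have hXv : (X v : MvPolynomial σ K) ∈ Ideal.span ((fun i => X i) '' S) :=
      Ideal.subset_span ⟨v, hvS, rfl⟩
    obtain ⟨c, hc, hcv⟩ := (monomial_mem_colon _).1 (hS ▸ hXv)
    exact ⟨c, hc, v, hcv, tsub_pos_iff_lt.1 (Nat.pos_of_ne_zero hv)⟩
  · intro h
    refine ⟨{v | ∃ c ∈ A, c ≤ m + Finsupp.single v 1}, le_antisymm (fun f hf => ?_) ?_⟩
    · rw [Ideal.mem_colon_span_singleton, monomialIdeal, mem_ideal_span_monomial_image] at hf
      rw [mem_ideal_span_X_image]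
      intro e he
      obtain ⟨b, hb, hbe⟩ := hf (e + m) (by simpa [coeff_mul_monomial] using he)
      obtain ⟨c, hc, v, hcv, hv⟩ := h b hb
      have hbv : b v ≤ e v + m v := hbe v
      exact ⟨v, ⟨c, hc, hcv⟩, by omega⟩
    · rw [Ideal.span_le]
      rintro _ ⟨v, hv, rfl⟩
      exact (monomial_mem_colon _).2 hv

/-- The exponent-level form of linear quotients for a family of monomials listed in the order of
the index type: the family is an antichain for divisibility, and whenever `j < i`, some earlier
generator `d k` divides `d i` times a variable `v` that occurs in `d j / gcd (d i, d j)`. -/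
structure IsLinearQuotientOrder [LT ι] (d : ι → σ →₀ ℕ) : Prop where
  not_le : ∀ i j, i ≠ j → ¬ d i ≤ d j
  exists_le_add_single :
    ∀ i j, j < i → ∃ k < i, ∃ v, d k ≤ d i + Finsupp.single v 1 ∧ d i v < d j v

lemma hasLinearQuotients_iff {I : Ideal (MvPolynomial σ K)} :
    HasLinearQuotients I ↔ ∃ (r : ℕ) (d : Fin r → σ →₀ ℕ),
      IsLinearQuotientOrder d ∧ monomialIdeal K (Set.range d) = I := by
  have colon_iff {r : ℕ} (d : Fin r → σ →₀ ℕ) (i : Fin r) :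
      genByVars (Submodule.colon
        (Ideal.span ((fun j => monomial (d j) (1 : K)) '' {j | j < i}))
        (Ideal.span {monomial (d i) (1 : K)})) ↔
      ∀ j < i, ∃ k < i, ∃ v, d k ≤ d i + Finsupp.single v 1 ∧ d i v < d j v := by
    rw [← Set.image_image (fun a => monomial a (1 : K)) d, ← monomialIdeal,
      genByVars_colon_monomial_iff]
    simp only [Set.forall_mem_image, Set.exists_mem_image, Set.mem_ofPred_eq]
  refine exists₂_congr fun r d => ?_
  simp only [colon_iff, monomialIdeal_range]
  exact ⟨fun ⟨hd, hI, hq⟩ => ⟨⟨hd, hq⟩, hI⟩, fun ⟨⟨hd, hq⟩, hI⟩ => ⟨hd, hI, hq⟩⟩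

lemma IsLinearQuotientOrder.hasLinearQuotients [LinearOrder ι] [Finite ι] {d : ι → σ →₀ ℕ}
    (hd : IsLinearQuotientOrder d) : HasLinearQuotients (monomialIdeal K (Set.range d)) := by
  have := Fintype.ofFinite ι
  let e : Fin (Fintype.card ι) ≃o ι := Fintype.orderIsoFinOfCardEq ι rfl
  refine hasLinearQuotients_iff.2 ⟨_, d ∘ e, ⟨fun i j hij => ?_, fun i j hji => ?_⟩, ?_⟩
  · exact hd.not_le _ _ (e.injective.ne hij)
  · obtain ⟨k, hk, hkv⟩ := hd.exists_le_add_single _ _ (e.lt_iff_lt.2 hji)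
    exact ⟨e.symm k, e.symm_apply_lt.2 hk, by simpa using hkv⟩
  · rw [e.surjective.range_comp]

/-- The exponents `w` in the variables `τ` lying over a member of the family `d` under the map of
variables `g`, each paired with the index of that member. Pairs are compared by their index first
and then by the lexicographic order of `w`. -/
abbrev ExponentLift (g : τ → σ) (d : ι → σ →₀ ℕ) : Type _ :=
  {p : ι ×ₗ Lex (τ →₀ ℕ) // (ofLex (ofLex p).2).mapDomain g = d (ofLex p).1}

namespace ExponentLift

variable {g : τ → σ} {d : ι → σ →₀ ℕ}

/-- The index of the generator over which a lifted exponent lies. -/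
def index (p : ExponentLift g d) : ι := (ofLex p.1).1

/-- The exponent vector underlying a lifted exponent. -/
def exponent (p : ExponentLift g d) : τ →₀ ℕ := ofLex (ofLex p.1).2

/-- The lifted exponent with index `i` and exponent vector `w`. -/
def mk (i : ι) (w : τ →₀ ℕ) (h : w.mapDomain g = d i) : ExponentLift g d :=
  ⟨toLex (i, toLex w), h⟩

lemma mapDomain_exponent (p : ExponentLift g d) : p.exponent.mapDomain g = d p.index := p.2

lemma ext_index_exponent {p q : ExponentLift g d} (hi : p.index = q.index)
    (hw : p.exponent = q.exponent) : p = q :=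
  Subtype.ext (Prod.ext hi hw)

lemma lt_iff [LT ι] [LT τ] {p q : ExponentLift g d} :
    p < q ↔ p.index < q.index ∨
      p.index = q.index ∧ toLex p.exponent < toLex q.exponent :=
  Prod.Lex.lt_iff

lemma range_exponent :
    Set.range (exponent : ExponentLift g d → τ →₀ ℕ) = Finsupp.mapDomain g ⁻¹' Set.range d := by
  ext w
  constructor
  · rintro ⟨p, rfl⟩
    exact ⟨p.index, p.mapDomain_exponent.symm⟩
  · rintro ⟨i, hi⟩
    exact ⟨mk i w hi.symm, rfl⟩

instance [Finite ι] [Filter.TendstoCofinite g] : Finite (ExponentLift g d) := by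
  have hfin : (Set.range (exponent : ExponentLift g d → τ →₀ ℕ)).Finite := by
    rw [range_exponent]
    exact Filter.TendstoCofinite.finite_preimage _ (Set.finite_range d)
  have := hfin.to_subtype
  refine Finite.of_injective (fun p => (p.index, Set.rangeFactorization exponent p))
    fun p q h => ?_
  rw [Prod.mk.injEq, Set.rangeFactorization_eq_rangeFactorization_iff] at h
  exact ext_index_exponent h.1 h.2

lemma exists_le_add_single_of_index_lt [LT ι] [LT τ]
    (hd : IsLinearQuotientOrder d) {p q : ExponentLift g d} (hlt : q.index < p.index) :
    ∃ k < p, ∃ v, k.exponent ≤ p.exponent + Finsupp.single v 1 ∧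
      p.exponent v < q.exponent v := by
  obtain ⟨k, hk, _, hkv, hv⟩ := hd.exists_le_add_single _ _ hlt
  rw [← p.mapDomain_exponent, ← q.mapDomain_exponent] at hv
  obtain ⟨v, rfl, hpq⟩ := exists_lt_of_mapDomain_lt hv
  have hle : d k ≤ (p.exponent + Finsupp.single v 1).mapDomain g := by
    rwa [Finsupp.mapDomain_add, Finsupp.mapDomain_single, mapDomain_exponent]
  obtain ⟨c, hc, hck⟩ := exists_le_mapDomain_eq _ hle
  exact ⟨mk k c hck, lt_iff.2 (Or.inl hk), v, hc, hpq⟩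

lemma exists_le_add_single_of_index_eq [LT ι] [LinearOrder τ]
    {p q : ExponentLift g d} (hpq : q.index = p.index)
    (hlt : toLex q.exponent < toLex p.exponent) :
    ∃ k < p, ∃ v, k.exponent ≤ p.exponent + Finsupp.single v 1 ∧
      p.exponent v < q.exponent v := by
  obtain ⟨o, heq, ho⟩ := Finsupp.Lex.lt_iff.1 hlt
  have hmap : p.exponent.mapDomain g = q.exponent.mapDomain g := by
    rw [mapDomain_exponent, mapDomain_exponent, hpq]
  obtain ⟨v, hgv, hv⟩ := exists_lt_of_mapDomain_eq hmap ho
  have hov : o < v := by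
    refine lt_of_not_ge fun hvo => ?_
    rcases hvo.lt_or_eq with hvo | rfl
    · exact hv.ne' (heq v hvo)
    · exact hv.not_gt ho
  have hle : Finsupp.single o 1 ≤ p.exponent :=
    Finsupp.single_le_iff.2 (Nat.one_le_of_lt ho)
  set c := p.exponent - Finsupp.single o 1 + Finsupp.single v 1 with hc
  have hcmap : c.mapDomain g = d p.index := by
    rw [hc, Finsupp.mapDomain_add, Finsupp.mapDomain_single, hgv, ← Finsupp.mapDomain_single,
      ← Finsupp.mapDomain_add, tsub_add_cancel_of_le hle, mapDomain_exponent]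
  have hclt : toLex c < toLex p.exponent := by
    refine Finsupp.Lex.lt_iff.2 ⟨o, fun j hj => ?_, ?_⟩
    · simp [hc, hj.ne', (hj.trans hov).ne']
    · have hpo : 0 < p.exponent o := Nat.zero_lt_of_lt ho
      simpa [hc, hov.ne'] using hpo
  exact ⟨mk p.index c hcmap, lt_iff.2 (Or.inr ⟨rfl, hclt⟩), v,
    add_le_add_left tsub_le_self _, hv⟩

lemma isLinearQuotientOrder_exponent [LT ι] [LinearOrder τ]
    (hd : IsLinearQuotientOrder d) :
    IsLinearQuotientOrder (exponent : ExponentLift g d → τ →₀ ℕ) where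
  not_le p q hne hle := by
    have hle' : d p.index ≤ d q.index := by
      rw [← p.mapDomain_exponent, ← q.mapDomain_exponent]
      exact Finsupp.mapDomain_mono hle
    have hi : p.index = q.index := by_contra fun hi => hd.not_le _ _ hi hle'
    have hmap : p.exponent.mapDomain g = q.exponent.mapDomain g := by
      rw [mapDomain_exponent, mapDomain_exponent, hi]
    exact hne (ext_index_exponent hi (eq_of_le_of_mapDomain_eq hle hmap))
  exists_le_add_single p q hlt := by
    rcases lt_iff.1 hlt with hlt | ⟨hpq, hlt⟩
    · exact exists_le_add_single_of_index_lt hd hlt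
    · exact exists_le_add_single_of_index_eq hpq hlt

end ExponentLift

theorem HasLinearQuotients.monomialIdeal_preimage_mapDomain {A : Set (σ →₀ ℕ)}
    (h : HasLinearQuotients (monomialIdeal K A)) (g : τ → σ) [Filter.TendstoCofinite g] :
    HasLinearQuotients (monomialIdeal K (Finsupp.mapDomain g ⁻¹' A)) := by
  obtain ⟨r, d, hd, hA⟩ := hasLinearQuotients_iff.1 h
  obtain ⟨_, -⟩ := exists_wellFoundedLT τ
  rw [← monomialIdeal_preimage_mapDomain_congr g hA, ← ExponentLift.range_exponent]
  exact (ExponentLift.isLinearQuotientOrder_exponent hd).hasLinearQuotients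

theorem HasLinearQuotients.monomialIdeal_preimage_mapDomain_pow {A : Set (σ →₀ ℕ)} {s : ℕ}
    (h : HasLinearQuotients (monomialIdeal K A ^ s)) (g : τ → σ) [Filter.TendstoCofinite g] :
    HasLinearQuotients (monomialIdeal K (Finsupp.mapDomain g ⁻¹' A) ^ s) := by
  rw [monomialIdeal_pow] at h ⊢
  rw [← preimage_mapDomain_nsmul]
  exact h.monomialIdeal_preimage_mapDomain g

end LinearQuotients

section Duplicate

variable {σ : Type*} (x : σ)

instance tendstoCofinite_getD : Filter.TendstoCofinite fun o : Option σ => o.getD x := by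
  refine (Filter.tendstoCofinite_iff_finite_preimage_singleton _).2 fun v => ?_
  refine (Set.toFinite {none, some v}).subset ?_
  rintro (_ | v) rfl <;> simp

lemma mapDomain_getD_mapDomain_some (u : σ →₀ ℕ) :
    (u.mapDomain some).mapDomain (fun o => o.getD x) = u := by
  rw [← Finsupp.mapDomain_comp]
  exact Finsupp.mapDomain_id

lemma mapDomain_some_add_single_none (w : Option σ →₀ ℕ) :
    w.some.mapDomain some + Finsupp.single none (w none) = w := by
  ext o
  cases o <;>
    simp [Finsupp.mapDomain_apply, Option.some_injective, Finsupp.mapDomain_of_notMem_range]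

lemma mapDomain_getD (w : Option σ →₀ ℕ) :
    w.mapDomain (fun o => o.getD x) = w.some + Finsupp.single x (w none) := by
  conv_lhs => rw [← mapDomain_some_add_single_none w]
  rw [Finsupp.mapDomain_add, mapDomain_getD_mapDomain_some, Finsupp.mapDomain_single]
  rfl

lemma mapDomain_getD_eq_iff {w : Option σ →₀ ℕ} {u : σ →₀ ℕ} (hu : u x ≤ 1) :
    w.mapDomain (fun o => o.getD x) = u ↔ w = u.mapDomain some ∨
      u x ≠ 0 ∧ w = (u - Finsupp.single x 1).mapDomain some + Finsupp.single none 1 := by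
  constructor
  · rintro rfl
    rw [mapDomain_getD] at hu ⊢
    have hw := mapDomain_some_add_single_none w
    rw [Finsupp.add_apply, Finsupp.single_eq_same] at hu
    obtain h | h : w none = 0 ∨ w none = 1 := by omega
    · rw [h, Finsupp.single_zero, add_zero] at hw ⊢
      exact Or.inl hw.symm
    · rw [h] at hw ⊢
      exact Or.inr ⟨by simp, by rw [add_tsub_cancel_right, hw]⟩
  · rintro (rfl | ⟨hux, rfl⟩)
    · exact mapDomain_getD_mapDomain_some x u
    · rw [Finsupp.mapDomain_add, mapDomain_getD_mapDomain_some, Finsupp.mapDomain_single]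
      exact tsub_add_cancel_of_le (Finsupp.single_le_iff.2 (Nat.one_le_iff_ne_zero.2 hux))

lemma duplicate_generators_eq (R : Type*) [CommSemiring R] {ι : Type*} {d : ι → σ →₀ ℕ}
    (hd : ∀ i, d i x ≤ 1) :
    (Set.range fun i => monomial ((d i).mapDomain some) (1 : R)) ∪
        {m | ∃ i, d i x ≠ 0 ∧ m = monomial
          ((d i - Finsupp.single x 1).mapDomain some + Finsupp.single none 1) (1 : R)} =
      (fun a => monomial a (1 : R)) ''
        (Finsupp.mapDomain (fun o : Option σ => o.getD x) ⁻¹' Set.range d) := by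
  have mem_preimage_iff (w : Option σ →₀ ℕ) :
      w ∈ Finsupp.mapDomain (fun o => o.getD x) ⁻¹' Set.range d ↔
        ∃ i, w = (d i).mapDomain some ∨ d i x ≠ 0 ∧
          w = (d i - Finsupp.single x 1).mapDomain some + Finsupp.single none 1 :=
    exists_congr fun i => eq_comm.trans (mapDomain_getD_eq_iff x (hd i))
  ext f
  constructor
  · rintro (⟨i, rfl⟩ | ⟨i, hi, rfl⟩)
    · exact ⟨_, (mem_preimage_iff _).2 ⟨i, Or.inl rfl⟩, rfl⟩
    · exact ⟨_, (mem_preimage_iff _).2 ⟨i, Or.inr ⟨hi, rfl⟩⟩, rfl⟩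
  · rintro ⟨w, hw, rfl⟩
    obtain ⟨i, rfl | ⟨hi, rfl⟩⟩ := (mem_preimage_iff w).1 hw
    · exact Or.inl ⟨i, rfl⟩
    · exact Or.inr ⟨i, hi, rfl⟩

end Duplicate

theorem stmt5_general {K : Type*} [Field K] {σ ι : Type*} (d : ι → (σ →₀ ℕ)) (x : σ)
    (hx : ∀ i, d i x ≤ 1) (s : ℕ)
    (h : HasLinearQuotients ((Ideal.span (Set.range fun i => (monomial (d i) (1 : K)))) ^ s)) :
    HasLinearQuotients
      ((Ideal.span
        ((Set.range fun i => (monomial (Finsupp.mapDomain Option.some (d i)) (1 : K))) ∪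
          {m | ∃ i, d i x ≠ 0 ∧
            m = monomial
              (Finsupp.mapDomain Option.some (d i - Finsupp.single x 1) +
                Finsupp.single (none : Option σ) 1) (1 : K)})) ^ s) := by
  rw [duplicate_generators_eq x K hx]
  rw [← monomialIdeal_range] at h
  exact h.monomialIdeal_preimage_mapDomain_pow _

/-- let `I` be an equigenerated squarefree monomial ideal with minimal
generating exponents `d i` (squarefree, equigenerated, an antichain), `x` a variable and
`s ≥ 1`. If `I^s` has linear quotients then so does `(I^x)^s`, where `I^x` is the duplicate
ideal of `I` by `x`, living in the polynomial ring with the extra variable `none`. -/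
theorem stmt5 {K : Type*} [Field K] {σ : Type*} {r : ℕ} (d : Fin r → (σ →₀ ℕ)) (x : σ)
    (hsf : ∀ (i : Fin r) (v : σ), d i v ≤ 1)
    (hmin : ∀ i j : Fin r, i ≠ j → ¬ d i ≤ d j)
    (heq : ∃ t : ℕ, ∀ i : Fin r, ((d i).sum fun _ k => k) = t)
    (s : ℕ) (hs : 1 ≤ s)
    (h : HasLinearQuotients ((Ideal.span (Set.range fun i => (monomial (d i) (1 : K)))) ^ s)) :
    HasLinearQuotients
      ((Ideal.span
        ((Set.range fun i => (monomial (Finsupp.mapDomain Option.some (d i)) (1 : K))) ∪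
          {m | ∃ i : Fin r, d i x ≠ 0 ∧
            m = monomial
              (Finsupp.mapDomain Option.some (d i - Finsupp.single x 1) +
                Finsupp.single (none : Option σ) 1) (1 : K)})) ^ s) :=
  stmt5_general d x (fun i => hsf i x) s h
end

section
/- Let G be a finite simple graph such that I(G)^s has linear quotients for some s ≥ 1, and let x ∈ V(G). Then I(G^{[x]})^s has linear quotients if and only if G^{[x]} is gapfree. -/
open MvPolynomial

/-- A graph is gapfree if any two disjoint edges are joined by an edge meeting both. -/
def Gapfree {V : Type*} (G : SimpleGraph V) : Prop :=
  ∀ a b c d : V, G.Adj a b → G.Adj c d → ({a, b} : Set V) ∩ {c, d} = ∅ →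
    ∃ u v : V, G.Adj u v ∧ (({u, v} : Set V) ∩ {a, b}).Nonempty ∧
      (({u, v} : Set V) ∩ {c, d}).Nonempty

/-- The edge ideal of a graph. -/
noncomputable def edgeIdeal (K : Type*) [Field K] {V : Type*} (G : SimpleGraph V) :
    Ideal (MvPolynomial V K) :=
  Ideal.span {m | ∃ a b : V, G.Adj a b ∧ m = X a * X b}

/-- The expansion `G^[x]` of `G` at `x`: a new vertex (represented by `none`) is joined
to `x` and to every neighbor of `x`. -/
def expansion {V : Type*} (G : SimpleGraph V) (x : V) : SimpleGraph (Option V) :=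
  SimpleGraph.fromRel (fun u v =>
    (∃ a b : V, u = some a ∧ v = some b ∧ G.Adj a b) ∨
    (∃ b : V, u = none ∧ v = some b ∧ (b = x ∨ G.Adj x b)))

/-
If `I(G)^s` has linear quotients, comparing the generators `(ab)^s` and `(cd)^s` for disjoint edges
`ab` and `cd` produces an edge joining them.

Conversely, the expansion at `x` is the pullback of `G` along the map that folds the new vertex `y`
onto `x`, together with the edge `xy`. Linear quotients pull back along such maps: generators with
the same image are listed lexicographically. Gapfreeness makes `N(x) = N(y)` a vertex cover of the
pullback, so every generator not already present before adding `xy` is a product of arcs directed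
out of `N(x)` and copies of `xy`. Those with a fixed part in `N(x)` are the bases of a transversal
polymatroid. Listing the new generators after the old ones, by decreasing degree in `N(x)` and then
lexicographically, gives linear quotients: either a variable of `N(x)` can replace the `x` of some
`xy`, or the exchange property applies.
-/

section MonomialIdeals

variable {K : Type*} [Field K] {V : Type*} [DecidableEq V] {S T P : Set (Multiset V)}

/-- The monomial ideal generated by the products `∏ v ∈ u, X v`, `u ∈ S`. Monomials are encoded
throughout as multisets of variables. -/
noncomputable def multisetIdeal (K : Type*) [Field K] {V : Type*} [DecidableEq V]
    (S : Set (Multiset V)) : Ideal (MvPolynomial V K) :=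
  Ideal.span ((fun u => monomial u.toFinsupp (1 : K)) '' S)

/-- A variable `t` dividing `v / gcd(u, v)` lies in the colon ideal of `(P)` by `u`. If such a `t`
exists for every `v ∈ P`, then that colon ideal is generated by variables. -/
def HasLinearStep (P : Set (Multiset V)) (u v : Multiset V) : Prop :=
  ∃ t, u.count t < v.count t ∧ ∃ w ∈ P, w ≤ t ::ₘ u

/-- Listing the monomials of `S` by increasing `f` gives linear quotients. -/
structure IsLinearQuotientRank {α : Type*} [LinearOrder α] (f : Multiset V → α)
    (S : Set (Multiset V)) : Prop where
  injOn : Set.InjOn f S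
  hasLinearStep : ∀ u ∈ S, ∀ v ∈ S, f v < f u → HasLinearStep {w ∈ S | f w < f u} u v

lemma HasLinearStep.mono {P Q : Set (Multiset V)} {u v : Multiset V} (h : HasLinearStep P u v)
    (hPQ : P ⊆ Q) : HasLinearStep Q u v :=
  let ⟨t, ht, w, hw, hle⟩ := h
  ⟨t, ht, w, hPQ hw, hle⟩

lemma toFinsupp_le_iff {u v : Multiset V} : u.toFinsupp ≤ v.toFinsupp ↔ u ≤ v :=
  Finsupp.orderIsoMultiset.symm.le_iff_le

lemma mem_multisetIdeal {p : MvPolynomial V K} :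
    p ∈ multisetIdeal K S ↔ ∀ m ∈ p.support, ∃ v ∈ S, v.toFinsupp ≤ m := by
  rw [multisetIdeal, ← Set.image_image (fun m => monomial m (1 : K)) Multiset.toFinsupp S,
    mem_ideal_span_monomial_image]
  simp only [Set.exists_mem_image]

lemma monomial_mem_multisetIdeal {m : V →₀ ℕ} :
    monomial m (1 : K) ∈ multisetIdeal K S ↔ ∃ v ∈ S, v.toFinsupp ≤ m := by
  classical
  simp [mem_multisetIdeal, support_monomial]

lemma eq_of_multisetIdeal_eq (hS : IsAntichain (· ≤ ·) S)
    (hT : IsAntichain (· ≤ ·) T) (h : multisetIdeal K S = multisetIdeal K T) : S = T := by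
  have hclosure : upperClosure S = upperClosure T := by
    ext u
    simp only [SetLike.mem_coe, mem_upperClosure, ← toFinsupp_le_iff]
    rw [← monomial_mem_multisetIdeal (K := K), h, monomial_mem_multisetIdeal]
  ext u
  rw [← hS.minimal_mem_upperClosure_iff_mem, hclosure, hT.minimal_mem_upperClosure_iff_mem]

lemma X_mem_colon_multisetIdeal {u : Multiset V} {t : V} :
    X t ∈ (multisetIdeal K P).colon (Ideal.span {monomial u.toFinsupp (1 : K)}) ↔
      ∃ w ∈ P, w ≤ t ::ₘ u := by
  rw [Ideal.mem_colon_span_singleton, X, monomial_mul, one_mul, monomial_mem_multisetIdeal,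
    ← Multiset.toFinsupp_singleton, ← Multiset.toFinsupp_add, Multiset.singleton_add]
  simp only [toFinsupp_le_iff]

lemma genByVars_colon_multisetIdeal_iff {u : Multiset V} :
    genByVars ((multisetIdeal K P).colon (Ideal.span {monomial u.toFinsupp (1 : K)})) ↔
      ∀ v ∈ P, HasLinearStep P u v := by
  constructor
  · rintro ⟨A, hA⟩ v hv
    have hquot : monomial (v.toFinsupp - u.toFinsupp) (1 : K) ∈
        Ideal.span (X '' A : Set (MvPolynomial V K)) := by
      rw [← hA, Ideal.mem_colon_span_singleton, monomial_mul, one_mul, monomial_mem_multisetIdeal]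
      exact ⟨v, hv, le_tsub_add⟩
    obtain ⟨t, htA, ht⟩ := mem_ideal_span_X_image.1 hquot (v.toFinsupp - u.toFinsupp)
      (by simp [mem_support_iff])
    refine ⟨t, by simpa [Nat.sub_eq_zero_iff_le] using ht, ?_⟩
    rw [← X_mem_colon_multisetIdeal (K := K), hA]
    exact Ideal.subset_span ⟨t, htA, rfl⟩
  · intro h
    refine ⟨{t | ∃ w ∈ P, w ≤ t ::ₘ u}, le_antisymm (fun p hp => ?_) ?_⟩
    · refine mem_ideal_span_X_image.2 fun m hm => ?_
      obtain ⟨v, hv, hle⟩ := mem_multisetIdeal.1 (Ideal.mem_colon_span_singleton.1 hp)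
        (m + u.toFinsupp) (by simpa [mem_support_iff] using hm)
      obtain ⟨t, ht, hw⟩ := h v hv
      have := hle t
      simp only [Finsupp.add_apply, Multiset.toFinsupp_apply] at this
      exact ⟨t, hw, by omega⟩
    · rw [Ideal.span_le, Set.image_subset_iff]
      exact fun t ht => X_mem_colon_multisetIdeal.2 ht

lemma HasLinearQuotients.exists_isLinearQuotientRank (hS : IsAntichain (· ≤ ·) S)
    (h : HasLinearQuotients (multisetIdeal K S)) :
    S.Finite ∧ ∃ f : Multiset V → ℕ, IsLinearQuotientRank f S := by
  obtain ⟨r, d, hanti, hspan, hcolon⟩ := h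
  obtain ⟨D, rfl⟩ : ∃ D : Fin r → Multiset V, d = fun i => (D i).toFinsupp :=
    ⟨fun i => (d i).toMultiset, by simp⟩
  simp only [toFinsupp_le_iff] at hanti
  have hinj : Function.Injective D := fun i j hij => by
    by_contra hne
    exact hanti i j hne hij.le
  have hD : IsAntichain (· ≤ ·) (Set.range D) := by
    rintro _ ⟨i, rfl⟩ _ ⟨j, rfl⟩ hne
    exact hanti i j (ne_of_apply_ne D hne)
  obtain rfl : Set.range D = S := by
    refine eq_of_multisetIdeal_eq (K := K) hD hS ?_
    rw [← hspan, multisetIdeal, ← Set.range_comp, Function.comp_def]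
  have hcolon (i : Fin r) : ∀ v ∈ D '' {j | j < i}, HasLinearStep (D '' {j | j < i}) (D i) v := by
    rw [← genByVars_colon_multisetIdeal_iff (K := K), multisetIdeal, Set.image_image]
    exact hcolon i
  refine ⟨Set.finite_range D, Function.extend D Fin.val 0, ?_, ?_⟩
  · rintro _ ⟨i, rfl⟩ _ ⟨j, rfl⟩ hij
    rw [hinj.extend_apply, hinj.extend_apply] at hij
    rw [Fin.ext hij]
  · rintro _ ⟨i, rfl⟩ _ ⟨j, rfl⟩ hlt
    rw [hinj.extend_apply, hinj.extend_apply] at hlt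
    refine (hcolon i _ ⟨j, hlt, rfl⟩).mono ?_
    rintro _ ⟨k, hk, rfl⟩
    exact ⟨⟨k, rfl⟩, by rwa [hinj.extend_apply, hinj.extend_apply]⟩

lemma exists_strictMono_range_eq {β α : Type*} [LinearOrder α] {S : Set β} (hS : S.Finite)
    {f : β → α} (hf : S.InjOn f) :
    ∃ (r : ℕ) (D : Fin r → β), Set.range D = S ∧ StrictMono (f ∘ D) := by
  have := hS.fintype
  let _ : LinearOrder S := LinearOrder.lift' (S.domRestrict f) hf.injective
  let e := Fintype.orderIsoFinOfCardEq S rfl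
  refine ⟨_, fun i => e i, ?_, fun i j hij => e.strictMono hij⟩
  rw [← Function.comp_def, Set.range_comp, e.surjective.range_eq, Set.image_univ,
    Subtype.range_coe]

lemma IsLinearQuotientRank.hasLinearQuotients {α : Type*} [LinearOrder α] {f : Multiset V → α}
    (hf : IsLinearQuotientRank f S) (hS : IsAntichain (· ≤ ·) S) (hfin : S.Finite) :
    HasLinearQuotients (multisetIdeal K S) := by
  obtain ⟨r, D, rfl, hmono⟩ := exists_strictMono_range_eq hfin hf.injOn
  have hinj : Function.Injective D := hmono.injective.of_comp
  refine ⟨r, fun i => (D i).toFinsupp, fun i j hij hle => ?_, ?_, fun i => ?_⟩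
  · exact hij (hinj (hS.eq ⟨i, rfl⟩ ⟨j, rfl⟩ (toFinsupp_le_iff.1 hle)))
  · rw [multisetIdeal, ← Set.range_comp, Function.comp_def]
  · rw [← Set.image_image (fun u => monomial u.toFinsupp (1 : K)) D, ← multisetIdeal,
      genByVars_colon_multisetIdeal_iff]
    rintro _ ⟨j, hj, rfl⟩
    refine (hf.hasLinearStep (D i) ⟨i, rfl⟩ (D j) ⟨j, rfl⟩ (hmono hj)).mono ?_
    rintro _ ⟨⟨k, rfl⟩, hk⟩
    exact ⟨k, hmono.lt_iff_lt.1 hk, rfl⟩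

end MonomialIdeals

section EdgeProducts

variable {V : Type*} {r : V → V → Prop} {s : ℕ} {u : Multiset V}

/-- The products of `s` pairs related by `r`. For `r = G.Adj` these are the minimal monomial
generators of `I(G)^s`. -/
inductive IsEdgeProduct (r : V → V → Prop) : ℕ → Multiset V → Prop
  | zero : IsEdgeProduct r 0 0
  | cons {s : ℕ} {a b : V} {u : Multiset V} (hab : r a b) (hu : IsEdgeProduct r s u) :
    IsEdgeProduct r (s + 1) (a ::ₘ b ::ₘ u)

lemma pair_add_eq_cons_cons (a b : V) (u : Multiset V) : {a, b} + u = a ::ₘ b ::ₘ u := by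
  rw [Multiset.insert_eq_cons, Multiset.cons_add, Multiset.singleton_add]

namespace IsEdgeProduct

lemma card_eq (h : IsEdgeProduct r s u) : u.card = 2 * s := by
  induction h with
  | zero => rfl
  | cons _ _ ih => simp only [Multiset.card_cons, ih]; ring

lemma eq_of_le {v : Multiset V} (hu : IsEdgeProduct r s u) (hv : IsEdgeProduct r s v)
    (h : u ≤ v) : u = v :=
  Multiset.eq_of_le_of_card_le h (by rw [hu.card_eq, hv.card_eq])

lemma isAntichain (r : V → V → Prop) (s : ℕ) : IsAntichain (· ≤ ·) {u | IsEdgeProduct r s u} :=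
  fun _ hu _ hv hne hle => hne (hu.eq_of_le hv hle)

lemma mono {r' : V → V → Prop} (hr : ∀ a b, r a b → r' a b) (h : IsEdgeProduct r s u) :
    IsEdgeProduct r' s u := by
  induction h with
  | zero => exact zero
  | cons hab _ ih => exact cons (hr _ _ hab) ih

lemma nsmul_pair {a b : V} (h : r a b) (s : ℕ) : IsEdgeProduct r s (s • {a, b}) := by
  induction s with
  | zero => rw [zero_nsmul]; exact zero
  | succ s ih =>
    rw [succ_nsmul', pair_add_eq_cons_cons]
    exact cons h ih

lemma exists_rel_of_mem [Std.Symm r] (h : IsEdgeProduct r s u) {a : V} (ha : a ∈ u) :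
    ∃ b ∈ u, r a b := by
  induction h with
  | zero => simp at ha
  | cons hcd _ ih =>
    simp only [Multiset.mem_cons] at ha ⊢
    rcases ha with rfl | rfl | ha
    · exact ⟨_, .inr (.inl rfl), hcd⟩
    · exact ⟨_, .inl rfl, symm hcd⟩
    · obtain ⟨b, hb, hab⟩ := ih ha
      exact ⟨b, .inr (.inr hb), hab⟩

lemma map_iff {W : Type*} {f : W → V} {u : Multiset W} :
    IsEdgeProduct r s (u.map f) ↔ IsEdgeProduct (fun a b => r (f a) (f b)) s u := by
  classical
  constructor
  · intro h
    generalize hv : u.map f = v at h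
    induction h generalizing u with
    | zero => rw [Multiset.map_eq_zero.1 hv]; exact zero
    | cons hab _ ih =>
      obtain ⟨a, ha, rfl, hua⟩ := (Multiset.map_eq_cons _ _ _ _).2 hv
      obtain ⟨b, hb, rfl, hub⟩ := (Multiset.map_eq_cons _ _ _ _).2 hua
      rw [← Multiset.cons_erase ha, ← Multiset.cons_erase hb]
      exact cons hab (ih hub)
  · intro h
    induction h with
    | zero => exact zero
    | cons hab _ ih => rw [Multiset.map_cons, Multiset.map_cons]; exact cons hab ih

lemma setOf_succ (r : V → V → Prop) (s : ℕ) : {u | IsEdgeProduct r (s + 1) u} =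
    Set.image2 (· + ·) {u | ∃ a b, r a b ∧ u = {a, b}} {u | IsEdgeProduct r s u} := by
  ext u
  constructor
  · rintro (_ | ⟨hab, hu⟩)
    exact ⟨_, ⟨_, _, hab, rfl⟩, _, hu, pair_add_eq_cons_cons _ _ _⟩
  · rintro ⟨_, ⟨a, b, hab, rfl⟩, u, hu, rfl⟩
    change IsEdgeProduct r (s + 1) ({a, b} + u)
    rw [pair_add_eq_cons_cons]
    exact cons hab hu

lemma finite_setOf_pair_of_ne_zero (hs : s ≠ 0) (h : {u | IsEdgeProduct r s u}.Finite) :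
    {u : Multiset V | ∃ a b, r a b ∧ u = {a, b}}.Finite := by
  refine (h.preimage (f := (s • ·)) (nsmul_right_injective hs).injOn).subset ?_
  rintro _ ⟨a, b, hab, rfl⟩
  exact nsmul_pair hab s

lemma finite_setOf (h : {u : Multiset V | ∃ a b, r a b ∧ u = {a, b}}.Finite) (s : ℕ) :
    {u | IsEdgeProduct r s u}.Finite := by
  induction s with
  | zero => exact (Set.finite_singleton 0).subset fun u hu => by cases hu; rfl
  | succ s ih => rw [setOf_succ]; exact h.image2 _ ih

lemma le_countP {q : V → Prop} [DecidablePred q] (hq : ∀ a b, r a b → q a ∨ q b)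
    (h : IsEdgeProduct r s u) : s ≤ u.countP q := by
  induction h with
  | zero => exact Nat.zero_le _
  | cons hab _ ih =>
    have := hq _ _ hab
    simp only [Multiset.countP_cons]
    split_ifs <;> first | omega | tauto

lemma countP_le {q : V → Prop} [DecidablePred q] (hq : ∀ a b, r a b → ¬ q b)
    (h : IsEdgeProduct r s u) : u.countP q ≤ s := by
  induction h with
  | zero => exact Nat.zero_le _
  | cons hab _ ih =>
    simp only [Multiset.countP_cons, if_neg (hq _ _ hab)]
    split_ifs <;> omega

lemma add_of_rel {A B : Multiset V} (h : Multiset.Rel r A B) : IsEdgeProduct r A.card (A + B) := by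
  induction h with
  | zero => exact zero
  | cons hab _ ih =>
    rw [Multiset.card_cons, Multiset.cons_add, Multiset.add_cons]
    exact cons hab ih

end IsEdgeProduct

lemma multisetIdeal_mul (K : Type*) [Field K] [DecidableEq V] (S T : Set (Multiset V)) :
    multisetIdeal K S * multisetIdeal K T = multisetIdeal K (Set.image2 (· + ·) S T) := by
  rw [multisetIdeal, multisetIdeal, multisetIdeal, Ideal.span_mul_span', ← Set.image2_mul,
    Set.image_image2, Set.image2_image_left, Set.image2_image_right]
  simp only [Multiset.toFinsupp_add, monomial_mul, one_mul]

lemma edgeIdeal_eq_multisetIdeal (K : Type*) [Field K] [DecidableEq V] (G : SimpleGraph V) :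
    edgeIdeal K G = multisetIdeal K {u | ∃ a b, G.Adj a b ∧ u = {a, b}} := by
  have hmonomial (a b : V) :
      (X a * X b : MvPolynomial V K) = monomial (Multiset.toFinsupp {a, b}) 1 := by
    rw [X, X, monomial_mul, one_mul, Multiset.insert_eq_cons, ← Multiset.singleton_add,
      Multiset.toFinsupp_add, Multiset.toFinsupp_singleton, Multiset.toFinsupp_singleton]
  rw [edgeIdeal, multisetIdeal]
  congr 1
  ext m
  constructor
  · rintro ⟨a, b, hab, rfl⟩
    exact ⟨_, ⟨a, b, hab, rfl⟩, (hmonomial a b).symm⟩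
  · rintro ⟨_, ⟨a, b, hab, rfl⟩, rfl⟩
    exact ⟨a, b, hab, (hmonomial a b).symm⟩

lemma edgeIdeal_pow (K : Type*) [Field K] [DecidableEq V] (G : SimpleGraph V) (s : ℕ) :
    edgeIdeal K G ^ s = multisetIdeal K {u | IsEdgeProduct G.Adj s u} := by
  induction s with
  | zero =>
    rw [pow_zero, Ideal.one_eq_top, eq_comm, Ideal.eq_top_iff_one]
    exact Ideal.subset_span ⟨0, .zero, by simp⟩
  | succ s ih =>
    rw [pow_succ', ih, edgeIdeal_eq_multisetIdeal, multisetIdeal_mul, IsEdgeProduct.setOf_succ]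

end EdgeProducts

section Gapfree

variable {V : Type*} {G : SimpleGraph V}

lemma gapfree_iff : Gapfree G ↔ ∀ a b c d, G.Adj a b → G.Adj c d →
    Disjoint ({a, b} : Set V) {c, d} →
      ∃ p ∈ ({a, b} : Set V), ∃ q ∈ ({c, d} : Set V), G.Adj p q := by
  simp only [Gapfree, ← Set.disjoint_iff_inter_eq_empty]
  refine forall₄_congr fun a b c d => imp_congr_right fun _ => imp_congr_right fun _ =>
    imp_congr_right fun hdisj => ⟨?_, ?_⟩
  · rintro ⟨u, v, huv, ⟨p, hp, hpab⟩, q, hq, hqcd⟩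
    have hne : p ≠ q := fun h => Set.disjoint_left.1 hdisj hpab (h ▸ hqcd)
    refine ⟨p, hpab, q, hqcd, ?_⟩
    rcases hp with rfl | rfl <;> rcases hq with rfl | rfl
    exacts [(hne rfl).elim, huv, huv.symm, (hne rfl).elim]
  · rintro ⟨p, hp, q, hq, hpq⟩
    exact ⟨p, q, hpq, ⟨p, .inl rfl, hp⟩, q, .inr rfl, hq⟩

variable {s : ℕ}

lemma IsLinearQuotientRank.exists_adj_of_lt [DecidableEq V] {α : Type*} [LinearOrder α]
    {f : Multiset V → α} (hf : IsLinearQuotientRank f {u | IsEdgeProduct G.Adj s u})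
    {u v : Multiset V} (hu : IsEdgeProduct G.Adj s u) (hv : IsEdgeProduct G.Adj s v)
    (hlt : f v < f u) : ∃ t ∈ v, ∃ z ∈ u, G.Adj t z := by
  obtain ⟨t, ht, w, ⟨hw, hwu⟩, hle⟩ := hf.hasLinearStep u hu v hv hlt
  have htw : t ∈ w := by
    by_contra htw
    have hle' : w ≤ u := (Multiset.le_cons_of_notMem htw).1 hle
    exact hwu.ne (congrArg f (IsEdgeProduct.eq_of_le hw hu hle'))
  have := G.symm
  obtain ⟨z, hz, htz⟩ := IsEdgeProduct.exists_rel_of_mem hw htw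
  have hzu : z ∈ u := (Multiset.mem_cons.1 (Multiset.mem_of_le hle hz)).resolve_left htz.ne'
  exact ⟨t, Multiset.count_pos.1 (by omega), z, hzu, htz⟩

theorem HasLinearQuotients.gapfree {K : Type*} [Field K] (hs : s ≠ 0)
    (h : HasLinearQuotients (edgeIdeal K G ^ s)) : Gapfree G := by
  classical
  rw [edgeIdeal_pow] at h
  obtain ⟨-, f, hf⟩ := h.exists_isLinearQuotientRank (IsEdgeProduct.isAntichain _ _)
  refine gapfree_iff.2 fun a b c d hab hcd hdisj => ?_
  have hu := IsEdgeProduct.nsmul_pair hab s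
  have hv := IsEdgeProduct.nsmul_pair hcd s
  have hmem {p q z : V} (hz : z ∈ s • ({p, q} : Multiset V)) : z ∈ ({p, q} : Set V) := by
    simpa using Multiset.mem_of_mem_nsmul hz
  rcases lt_trichotomy (f (s • {a, b})) (f (s • {c, d})) with hlt | heq | hlt
  · obtain ⟨p, hp, q, hq, hpq⟩ := hf.exists_adj_of_lt hv hu hlt
    exact ⟨p, hmem hp, q, hmem hq, hpq⟩
  · have ha : a ∈ s • ({c, d} : Multiset V) := by
      rw [← hf.injOn hu hv heq]
      exact (Multiset.mem_nsmul_of_ne_zero hs).2 (by simp)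
    exact (Set.disjoint_left.1 hdisj (.inl rfl) (hmem ha)).elim
  · obtain ⟨q, hq, p, hp, hqp⟩ := hf.exists_adj_of_lt hu hv hlt
    exact ⟨p, hmem hp, q, hmem hq, hqp.symm⟩

end Gapfree

section LexRank

variable {V : Type*} [LinearOrder V] {u v : Multiset V} {p t : V}

/-- The reversed lexicographic order on monomials, used to break ties: in lexicographically
decreasing order, a monomial comes after those obtained from it by replacing a variable by a
smaller one. -/
noncomputable def lexRank (u : Multiset V) : (Lex (V →₀ ℕ))ᵒᵈ :=
  OrderDual.toDual (toLex u.toFinsupp)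

lemma lexRank_injective : Function.Injective (lexRank (V := V)) :=
  OrderDual.toDual.injective.comp (toLex.injective.comp Multiset.toFinsupp.injective)

lemma exists_of_lexRank_lt (h : lexRank v < lexRank u) :
    ∃ t, u.count t < v.count t ∧ ∀ p, v.count p < u.count p → t < p := by
  obtain ⟨t, heq, ht⟩ := Finsupp.Lex.lt_iff.1 h
  refine ⟨t, ht, fun p hp => lt_of_not_ge fun hpt => ?_⟩
  rcases hpt.lt_or_eq with hpt | rfl
  · exact hp.ne' (heq p hpt)
  · exact hp.not_gt ht

lemma lexRank_cons_erase_lt (htp : t < p) : lexRank (t ::ₘ u.erase p) < lexRank u := by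
  refine Finsupp.Lex.lt_iff.2 ⟨t, fun j hj => ?_, ?_⟩
  · change u.count j = (t ::ₘ u.erase p).count j
    rw [Multiset.count_cons_of_ne hj.ne, Multiset.count_erase_of_ne (hj.trans htp).ne]
  · change u.count t < (t ::ₘ u.erase p).count t
    rw [Multiset.count_cons_self, Multiset.count_erase_of_ne htp.ne]
    exact Nat.lt_succ_self _

/-- The order by decreasing degree in the variables satisfying `q`, with ties broken by
`lexRank`. -/
noncomputable def degLexRank (q : V → Prop) [DecidablePred q] (u : Multiset V) :
    ℕᵒᵈ ×ₗ (Lex (V →₀ ℕ))ᵒᵈ :=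
  toLex (OrderDual.toDual (u.countP q), lexRank u)

variable {q : V → Prop} [DecidablePred q]

lemma degLexRank_injective : Function.Injective (degLexRank q) := fun _ _ huv =>
  lexRank_injective (congrArg (fun p => (ofLex p).2) huv)

lemma degLexRank_lt_iff : degLexRank q v < degLexRank q u ↔
    u.countP q < v.countP q ∨ v.countP q = u.countP q ∧ lexRank v < lexRank u := by
  simp only [degLexRank, Prod.Lex.toLex_lt_toLex, OrderDual.toDual_lt_toDual,
    OrderDual.toDual_inj]

end LexRank

section Comap

variable {V W : Type*} {f : W → V}

section Multiset

variable [DecidableEq W] {u v : Multiset W}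

lemma filter_le_filter_of_count_le {q : W → Prop} [DecidablePred q]
    (h : ∀ a, q a → u.count a ≤ v.count a) : u.filter q ≤ v.filter q := by
  refine Multiset.le_iff_count.2 fun a => ?_
  simp only [Multiset.count_filter]
  split_ifs with ha
  exacts [h a ha, le_rfl]

lemma exists_count_lt_of_count_map_lt [DecidableEq V] {b : V}
    (h : (u.map f).count b < (v.map f).count b) : ∃ a, f a = b ∧ u.count a < v.count a := by
  by_contra! hle
  rw [Multiset.count_map, Multiset.count_map] at h
  exact h.not_ge (Multiset.card_le_card (filter_le_filter_of_count_le fun a ha => hle a ha.symm))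

lemma exists_count_lt_of_map_eq (h : u.map f = v.map f) {a : W}
    (ha : u.count a < v.count a) : ∃ c, f c = f a ∧ v.count c < u.count c := by
  classical
  by_contra! hle
  have hfilter : u.filter (f a = f ·) = v.filter (f a = f ·) := by
    refine Multiset.eq_of_le_of_card_le (filter_le_filter_of_count_le fun c hc => hle c hc.symm) ?_
    have hcard := congrArg (Multiset.count (f a)) h
    rw [Multiset.count_map, Multiset.count_map] at hcard
    exact hcard.ge
  have hcount := congrArg (Multiset.count a) hfilter
  simp only [Multiset.count_filter, if_true] at hcount
  exact ha.ne hcount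

end Multiset

lemma exists_le_map_eq_of_le_map {u : Multiset W} {w : Multiset V} (h : w ≤ u.map f) :
    ∃ w' ≤ u, w'.map f = w := by
  classical
  induction w using Multiset.induction_on generalizing u with
  | empty => exact ⟨0, Multiset.zero_le u, Multiset.map_zero f⟩
  | cons b w ih =>
    obtain ⟨a, ha, rfl⟩ := Multiset.mem_map.1 (Multiset.mem_of_le h (Multiset.mem_cons_self b w))
    rw [← Multiset.cons_erase ha, Multiset.map_cons, Multiset.cons_le_cons_iff] at h
    obtain ⟨w', hle, rfl⟩ := ih h
    rw [← Multiset.cons_erase ha]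
    exact ⟨a ::ₘ w', Multiset.cons_le_cons a hle, Multiset.map_cons f a w'⟩

lemma finite_setOf_map_eq (hf : ∀ b, (f ⁻¹' {b}).Finite) (v : Multiset V) :
    {u : Multiset W | u.map f = v}.Finite := by
  classical
  induction v using Multiset.induction_on with
  | empty => simp
  | cons b v ih =>
    refine ((hf b).image2 (· ::ₘ ·) ih).subset fun u hu => ?_
    obtain ⟨a, ha, hab, hv⟩ := (Multiset.map_eq_cons _ _ _ _).2 hu
    exact ⟨a, hab, u.erase a, hv, Multiset.cons_erase ha⟩

lemma IsLinearQuotientRank.comap [LinearOrder W] [DecidableEq V] {α : Type*} [LinearOrder α]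
    {S : Set (Multiset V)} {ρ : Multiset V → α} (hρ : IsLinearQuotientRank ρ S) (f : W → V) :
    IsLinearQuotientRank (fun u => toLex (ρ (u.map f), lexRank u)) {u | u.map f ∈ S} where
  injOn u _ v _ huv := lexRank_injective (congrArg (fun p => (ofLex p).2) huv)
  hasLinearStep u hu v hv hlt := by
    rcases Prod.Lex.toLex_lt_toLex.1 hlt with hlt | ⟨heq, hlt⟩
    · obtain ⟨b, hb, w, ⟨hw, hwu⟩, hle⟩ := hρ.hasLinearStep _ hu _ hv hlt
      obtain ⟨t, rfl, ht⟩ := exists_count_lt_of_count_map_lt hb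
      rw [← Multiset.map_cons] at hle
      obtain ⟨w, hle', rfl⟩ := exists_le_map_eq_of_le_map hle
      exact ⟨t, ht, w, ⟨hw, Prod.Lex.toLex_lt_toLex.2 (.inl hwu)⟩, hle'⟩
    · obtain ⟨t, ht, hmin⟩ := exists_of_lexRank_lt hlt
      have hmap : u.map f = v.map f := (hρ.injOn hv hu heq).symm
      obtain ⟨p, hpt, hp⟩ := exists_count_lt_of_map_eq hmap ht
      have hpu : p ∈ u := Multiset.count_pos.1 (by omega)
      have hw : (t ::ₘ u.erase p).map f = u.map f := by
        rw [Multiset.map_cons, ← hpt, ← Multiset.map_cons, Multiset.cons_erase hpu]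
      refine ⟨t, ht, t ::ₘ u.erase p, ⟨?_, ?_⟩,
        Multiset.cons_le_cons t (Multiset.erase_le p u)⟩
      · change (t ::ₘ u.erase p).map f ∈ S
        rwa [hw]
      · exact Prod.Lex.toLex_lt_toLex.2 (.inr ⟨congrArg ρ hw, lexRank_cons_erase_lt (hmin p hp)⟩)

theorem HasLinearQuotients.comap {K : Type*} [Field K] {G : SimpleGraph V} {s : ℕ}
    (h : HasLinearQuotients (edgeIdeal K G ^ s)) (hf : ∀ b, (f ⁻¹' {b}).Finite) :
    HasLinearQuotients (edgeIdeal K (G.comap f) ^ s) := by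
  classical
  obtain ⟨_, -⟩ := exists_wellFoundedLT W
  have hset : {u | IsEdgeProduct (G.comap f).Adj s u} =
      {u : Multiset W | u.map f ∈ {v | IsEdgeProduct G.Adj s v}} :=
    Set.ext fun u => (IsEdgeProduct.map_iff (r := G.Adj)).symm
  rw [edgeIdeal_pow] at h ⊢
  obtain ⟨hfin, ρ, hρ⟩ := h.exists_isLinearQuotientRank (IsEdgeProduct.isAntichain _ _)
  refine IsLinearQuotientRank.hasLinearQuotients (hset ▸ hρ.comap f)
    (IsEdgeProduct.isAntichain _ _) ?_
  rw [hset]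
  exact hfin.preimage' fun v _ => finite_setOf_map_eq hf v

end Comap

section Exchange

variable {Z V : Type*} [DecidableEq V] {r : Z → V → Prop} {A : Multiset Z} {B C : Multiset V}

lemma exists_cons_rel_of_count_lt {t : V} (hB : Multiset.Rel r A B) (hC : Multiset.Rel r A C)
    (ht : B.count t < C.count t) :
    ∃ z b A' B' C', A = z ::ₘ A' ∧ B = b ::ₘ B' ∧ C = t ::ₘ C' ∧ b ≠ t ∧ r z t ∧
      Multiset.Rel r A' B' ∧ Multiset.Rel r A' C' := by
  induction hB generalizing C with
  | zero => simp [Multiset.rel_zero_left.1 hC] at ht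
  | @cons z b A B _ hB ih =>
    obtain ⟨c, C, hzc, hAC, rfl⟩ := Multiset.rel_cons_left.1 hC
    by_cases hbc : c = t ∧ b ≠ t
    · obtain ⟨rfl, hb⟩ := hbc
      exact ⟨z, b, A, B, C, rfl, rfl, rfl, hb, hzc, hB, hAC⟩
    · have ht' : B.count t < C.count t := by
        simp only [Multiset.count_cons, eq_comm (a := t)] at ht
        split_ifs at ht <;> first | omega | tauto
      obtain ⟨z', b', A', B', C', rfl, rfl, rfl, hb, hzt, hB', hC'⟩ := ih hAC ht'
      exact ⟨z', b', z ::ₘ A', b ::ₘ B', c ::ₘ C', Multiset.cons_swap .., Multiset.cons_swap ..,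
        Multiset.cons_swap .., hb, hzt, .cons ‹_› hB', .cons hzc hC'⟩

/-- The exchange property of a transversal polymatroid: `p` is the end of an alternating path that
starts at `t`. -/
lemma exists_rel_cons_erase {t : V} (hB : Multiset.Rel r A B) (hC : Multiset.Rel r A C)
    (ht : B.count t < C.count t) :
    ∃ p, C.count p < B.count p ∧ Multiset.Rel r A (t ::ₘ B.erase p) := by
  induction hn : A.card generalizing A B C t with
  | zero =>
    obtain rfl := Multiset.card_eq_zero.1 hn
    simp [Multiset.rel_zero_left.1 hC] at ht
  | succ n ih =>
    obtain ⟨z, b, A, B, C, rfl, rfl, rfl, hbt, hzt, hB', hC'⟩ :=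
      exists_cons_rel_of_count_lt hB hC ht
    rcases lt_or_ge ((t ::ₘ C).count b) ((b ::ₘ B).count b) with hb | hb
    · exact ⟨b, hb, by rw [Multiset.erase_cons_head]; exact .cons hzt hB'⟩
    · rw [Multiset.count_cons_self, Multiset.count_cons_of_ne hbt] at hb
      obtain ⟨p, hp, hrel⟩ := ih hB' hC' hb (by simpa using hn)
      have hpb : p ≠ b := by rintro rfl; omega
      refine ⟨p, ?_, ?_⟩
      · rw [Multiset.count_cons_of_ne hbt.symm, Multiset.count_cons_self] at ht
        have hpt : p ≠ t := by rintro rfl; omega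
        rwa [Multiset.count_cons_of_ne hpt, Multiset.count_cons_of_ne hpb]
      · rw [Multiset.erase_cons_tail _ hpb.symm]
        exact .cons hzt hrel

end Exchange

section Twins

variable {V : Type*} {G : SimpleGraph V} {x y : V} {s : ℕ} {u v : Multiset V}

/-- `x` and `y` are distinct non-adjacent vertices with the same neighbours, and these neighbours
form a vertex cover. -/
structure IsTwinCover (G : SimpleGraph V) (x y : V) : Prop where
  ne : x ≠ y
  adj_iff : ∀ z, G.Adj x z ↔ G.Adj y z
  isVertexCover : G.IsVertexCover (G.neighborSet x)

/-- The edges of `G ⊔ edge x y` with exactly one end in `N(x)`, directed out of `N(x)`, together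
with the edge `xy`, directed from `x` to `y`. -/
inductive OutwardAdj (G : SimpleGraph V) (x y : V) : V → V → Prop
  | adj {a b : V} : G.Adj x a → ¬ G.Adj x b → G.Adj a b → OutwardAdj G x y a b
  | twin : OutwardAdj G x y x y

namespace IsTwinCover

lemma of_gapfree (hne : x ≠ y) (htwin : ∀ z, G.Adj x z ↔ G.Adj y z)
    (h : Gapfree (G ⊔ SimpleGraph.edge x y)) : IsTwinCover G x y := by
  refine ⟨hne, htwin, fun a b hab => ?_⟩
  by_contra! hcover
  obtain ⟨ha, hb⟩ : ¬ G.Adj x a ∧ ¬ G.Adj x b := hcover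
  have hax : a ≠ x := by rintro rfl; exact hb hab
  have hay : a ≠ y := by rintro rfl; exact hb ((htwin b).2 hab)
  have hbx : b ≠ x := by rintro rfl; exact ha hab.symm
  have hby : b ≠ y := by rintro rfl; exact ha ((htwin a).2 hab.symm)
  obtain ⟨p, hp, q, hq, hpq⟩ := gapfree_iff.1 h x y a b (by simp [SimpleGraph.edge_adj, hne])
    (.inl hab) (by simp [hax, hay, hbx, hby])
  have hqxy : q ≠ x ∧ q ≠ y := by rcases hq with rfl | rfl <;> constructor <;> assumption
  have hadj : G.Adj p q := hpq.resolve_right (by simp [SimpleGraph.edge_adj, hqxy])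
  have hxq : G.Adj x q := by
    rcases hp with rfl | rfl
    exacts [hadj, (htwin q).2 hadj]
  rcases hq with rfl | rfl
  exacts [ha hxq, hb hxq]

variable (h : IsTwinCover G x y)
include h

lemma not_adj : ¬ G.Adj x y := fun hxy => G.irrefl ((h.adj_iff y).1 hxy)

lemma not_adj_of_outwardAdj {a b : V} (hab : OutwardAdj G x y a b) : ¬ G.Adj x b := by
  cases hab with
  | adj _ hb _ => exact hb
  | twin => exact h.not_adj

lemma sup_edge_adj : (G ⊔ SimpleGraph.edge x y).Adj x y :=
  .inr ((SimpleGraph.edge_adj ..).2 ⟨.inl ⟨rfl, rfl⟩, h.ne⟩)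

lemma sup_edge_adj_of_outwardAdj {a b : V} (hab : OutwardAdj G x y a b) :
    (G ⊔ SimpleGraph.edge x y).Adj a b := by
  cases hab with
  | adj _ _ hab => exact .inl hab
  | twin => exact h.sup_edge_adj

end IsTwinCover

lemma cons_cons_swap (a b c d : V) (u : Multiset V) :
    a ::ₘ b ::ₘ c ::ₘ d ::ₘ u = c ::ₘ d ::ₘ a ::ₘ b ::ₘ u := by
  simp only [← Multiset.singleton_add]
  abel

lemma isEdgeProduct_or_outward_cons {a b : V} (ha : G.Adj x a) (hb : ¬ G.Adj x b) (hab : G.Adj a b)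
    (hu : IsEdgeProduct G.Adj s u ∨ IsEdgeProduct (OutwardAdj G x y) s u) :
    IsEdgeProduct G.Adj (s + 1) (a ::ₘ b ::ₘ u) ∨
      IsEdgeProduct (OutwardAdj G x y) (s + 1) (a ::ₘ b ::ₘ u) :=
  hu.imp (.cons hab) (.cons (.adj ha hb hab))

namespace IsTwinCover

variable (h : IsTwinCover G x y)
include h

lemma isEdgeProduct_or_outward_cons_twins (hu : IsEdgeProduct G.Adj s u) :
    IsEdgeProduct G.Adj (s + 1) (x ::ₘ y ::ₘ u) ∨
      IsEdgeProduct (OutwardAdj G x y) (s + 1) (x ::ₘ y ::ₘ u) := by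
  induction hu with
  | zero => exact .inr (.cons .twin .zero)
  | @cons _ a b u hab hu ih =>
    rw [cons_cons_swap]
    by_cases ha : G.Adj x a <;> by_cases hb : G.Adj x b
    · rw [← cons_cons_swap, Multiset.cons_swap y a]
      exact .inl (.cons ha (.cons ((h.adj_iff b).1 hb) hu))
    · exact isEdgeProduct_or_outward_cons ha hb hab ih
    · rw [Multiset.cons_swap]
      exact isEdgeProduct_or_outward_cons hb ha hab.symm ih
    · exact ((h.isVertexCover hab).elim ha hb).elim

lemma isEdgeProduct_or_outward_cons_of_adj {a b : V} (ha : G.Adj x a) (hb : G.Adj x b)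
    (hab : G.Adj a b) (hu : IsEdgeProduct (OutwardAdj G x y) s u) :
    IsEdgeProduct G.Adj (s + 1) (a ::ₘ b ::ₘ u) ∨
      IsEdgeProduct (OutwardAdj G x y) (s + 1) (a ::ₘ b ::ₘ u) := by
  induction hu with
  | zero => exact .inl (.cons hab .zero)
  | cons hcd hu ih =>
    cases hcd with
    | adj hc hd hcd =>
      rw [cons_cons_swap]
      exact isEdgeProduct_or_outward_cons hc hd hcd ih
    | twin =>
      -- The edge `ab` inside `N(x)` is traded away against `xy`, since `ab * xy = ax * by`.
      rw [Multiset.cons_swap b x]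
      exact .inr (.cons (.adj ha (G.irrefl) ha.symm)
        (.cons (.adj hb h.not_adj ((h.adj_iff b).1 hb).symm) hu))

lemma isEdgeProduct_or_outward (hu : IsEdgeProduct (G ⊔ SimpleGraph.edge x y).Adj s u) :
    IsEdgeProduct G.Adj s u ∨ IsEdgeProduct (OutwardAdj G x y) s u := by
  induction hu with
  | zero => exact .inl .zero
  | @cons _ a b u hab _ ih =>
    rcases hab with hab | hab
    · by_cases ha : G.Adj x a <;> by_cases hb : G.Adj x b
      · exact ih.elim (fun hu => .inl (.cons hab hu))
          (h.isEdgeProduct_or_outward_cons_of_adj ha hb hab)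
      · exact isEdgeProduct_or_outward_cons ha hb hab ih
      · rw [Multiset.cons_swap]
        exact isEdgeProduct_or_outward_cons hb ha hab.symm ih
      · exact ((h.isVertexCover hab).elim ha hb).elim
    · have htwins := ih.elim h.isEdgeProduct_or_outward_cons_twins fun hu => .inr (.cons .twin hu)
      obtain ⟨⟨rfl, rfl⟩ | ⟨rfl, rfl⟩, -⟩ := (SimpleGraph.edge_adj ..).1 hab
      · exact htwins
      · rwa [Multiset.cons_swap]

end IsTwinCover

lemma IsEdgeProduct.adj_or_exists_cons_twins (hu : IsEdgeProduct (OutwardAdj G x y) s u) :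
    IsEdgeProduct G.Adj s u ∨
      ∃ k v, s = k + 1 ∧ u = x ::ₘ y ::ₘ v ∧ IsEdgeProduct (OutwardAdj G x y) k v := by
  induction hu with
  | zero => exact .inl .zero
  | cons hab hu ih =>
    cases hab with
    | adj ha hb hab =>
      obtain hu | ⟨k, v, rfl, rfl, hv⟩ := ih
      · exact .inl (.cons hab hu)
      · exact .inr ⟨_, _, rfl, cons_cons_swap .., .cons (.adj ha hb hab) hv⟩
    | twin => exact .inr ⟨_, _, rfl, rfl, hu⟩

namespace IsTwinCover

variable (h : IsTwinCover G x y) [DecidablePred (G.Adj x)]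
include h

lemma countP_adj_le (hu : IsEdgeProduct (OutwardAdj G x y) s u) : u.countP (G.Adj x) ≤ s :=
  hu.countP_le fun _ _ => h.not_adj_of_outwardAdj

lemma le_countP_adj (hu : IsEdgeProduct G.Adj s u) : s ≤ u.countP (G.Adj x) :=
  hu.le_countP fun _ _ hab => h.isVertexCover hab

lemma exists_rel_outwardAdj (hu : IsEdgeProduct (OutwardAdj G x y) s u) :
    ∃ A B, Multiset.Rel (OutwardAdj G x y) A B ∧ u = A + B ∧
      A = u.filter (G.Adj x) + Multiset.replicate (s - u.countP (G.Adj x)) x := by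
  induction hu with
  | zero => exact ⟨0, 0, .zero, by simp⟩
  | @cons s a b u hab hu ih =>
    obtain ⟨A, B, hAB, hu', hA⟩ := ih
    refine ⟨a ::ₘ A, b ::ₘ B, .cons hab hAB, ?_, ?_⟩
    · rw [Multiset.cons_add, Multiset.add_cons, ← hu']
    · cases hab with
      | adj ha hb _ => simp [ha, hb, hA]
      | twin => simp [h.not_adj, hA, Nat.succ_sub (h.countP_adj_le hu), Multiset.replicate_succ]

lemma exists_exchange [DecidableEq V] (hu : IsEdgeProduct (OutwardAdj G x y) s u)
    (hv : IsEdgeProduct (OutwardAdj G x y) s v) (huv : u.filter (G.Adj x) = v.filter (G.Adj x))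
    {t : V} (ht : u.count t < v.count t) :
    ∃ p, v.count p < u.count p ∧ IsEdgeProduct (OutwardAdj G x y) s (t ::ₘ u.erase p) := by
  obtain ⟨A, B, hAB, rfl, hA⟩ := h.exists_rel_outwardAdj hu
  obtain ⟨A', C, hAC, rfl, hA'⟩ := h.exists_rel_outwardAdj hv
  obtain rfl : A = A' := by
    rw [hA, hA', Multiset.countP_eq_card_filter, Multiset.countP_eq_card_filter, huv]
  simp only [Multiset.count_add, add_lt_add_iff_left] at ht ⊢
  obtain ⟨p, hp, hrel⟩ := exists_rel_cons_erase hAB hAC ht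
  refine ⟨p, hp, ?_⟩
  have hcard : A.card = s := by
    have := (IsEdgeProduct.add_of_rel hAB).card_eq
    have := hu.card_eq
    omega
  have hpB : p ∈ B := Multiset.count_pos.1 (by omega)
  rw [Multiset.erase_add_right_pos _ hpB, ← Multiset.add_cons, ← hcard]
  exact .add_of_rel hrel

end IsTwinCover

end Twins

section Glue

variable {V : Type*} [DecidableEq V] {S T : Set (Multiset V)} [DecidablePred (· ∈ S)]
  {α β : Type*} [LinearOrder α] [LinearOrder β] {f : Multiset V → α} {g : Multiset V → β}

lemma IsLinearQuotientRank.extend (hf : IsLinearQuotientRank f S) (hST : S ⊆ T)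
    (hg : Set.InjOn g T) (hstep : ∀ u ∈ T, u ∉ S → ∀ v ∈ T, v ∈ S ∨ g v < g u →
      HasLinearStep {w ∈ T | w ∈ S ∨ g w < g u} u v) :
    IsLinearQuotientRank
      (fun u => toLex (if u ∈ S then Sum.inl (f u) else Sum.inr (g u))) T where
  injOn u hu v hv huv := by
    have huv := toLex.injective huv
    split_ifs at huv with hu' hv' hv'
    · exact hf.injOn hu' hv' (Sum.inl_injective huv)
    · exact hg hu hv (Sum.inr_injective huv)
  hasLinearStep u hu v hv hlt := by
    by_cases hu' : u ∈ S
    · have hv' : v ∈ S := by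
        by_contra hv'
        simp [hu', hv'] at hlt
      refine (hf.hasLinearStep u hu' v hv' (by simpa [hu', hv'] using hlt)).mono ?_
      rintro w ⟨hw, hwu⟩
      exact ⟨hST hw, by simpa [hu', hw] using hwu⟩
    · refine (hstep u hu hu' v hv ?_).mono ?_
      · by_cases hv' : v ∈ S
        · exact .inl hv'
        · exact .inr (by simpa [hu', hv'] using hlt)
      · rintro w ⟨hw, hwu⟩
        refine ⟨hw, ?_⟩
        by_cases hw' : w ∈ S
        · simp [hu', hw']
        · simpa [hu', hw'] using hwu.resolve_left hw'

end Glue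

section SupEdge

variable {V : Type*} {G : SimpleGraph V} {x y : V} {s : ℕ} {u v : Multiset V}

lemma finite_setOf_isEdgeProduct_sup_edge (hs : s ≠ 0) (h : {u | IsEdgeProduct G.Adj s u}.Finite)
    (x y : V) : {u | IsEdgeProduct (G ⊔ SimpleGraph.edge x y).Adj s u}.Finite := by
  have hpair := IsEdgeProduct.finite_setOf_pair_of_ne_zero hs h
  refine IsEdgeProduct.finite_setOf ((hpair.insert {x, y}).subset ?_) s
  rintro _ ⟨a, b, hab | hab, rfl⟩
  · exact .inr ⟨a, b, hab, rfl⟩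
  · obtain ⟨⟨rfl, rfl⟩ | ⟨rfl, rfl⟩, -⟩ := (SimpleGraph.edge_adj ..).1 hab
    exacts [.inl rfl, .inl (Multiset.pair_comm _ _)]

namespace IsTwinCover

variable (h : IsTwinCover G x y) [LinearOrder V] [DecidablePred (G.Adj x)]
include h

lemma hasLinearStep_of_count_lt (hu : IsEdgeProduct (OutwardAdj G x y) s u)
    (hu' : ¬ IsEdgeProduct G.Adj s u) {z : V} (hz : G.Adj x z) (hlt : u.count z < v.count z) :
    HasLinearStep {w | IsEdgeProduct (OutwardAdj G x y) s w ∧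
      degLexRank (G.Adj x) w < degLexRank (G.Adj x) u} u v := by
  obtain ⟨k, m, rfl, rfl, hm⟩ := hu.adj_or_exists_cons_twins.resolve_left hu'
  refine ⟨z, hlt, z ::ₘ y ::ₘ m, ⟨?_, ?_⟩,
    Multiset.cons_le_cons z (Multiset.le_cons_self _ x)⟩
  · exact .cons (.adj hz h.not_adj ((h.adj_iff z).1 hz).symm) hm
  · refine degLexRank_lt_iff.2 (.inl ?_)
    simp [hz]

lemma hasLinearStep_of_count_le (hu : IsEdgeProduct (OutwardAdj G x y) s u)
    (hu' : ¬ IsEdgeProduct G.Adj s u) (hv : IsEdgeProduct (G ⊔ SimpleGraph.edge x y).Adj s v)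
    (hvu : IsEdgeProduct G.Adj s v ∨ degLexRank (G.Adj x) v < degLexRank (G.Adj x) u)
    (hle : ∀ z, G.Adj x z → v.count z ≤ u.count z) :
    HasLinearStep {w | IsEdgeProduct (OutwardAdj G x y) s w ∧
      degLexRank (G.Adj x) w < degLexRank (G.Adj x) u} u v := by
  have hfilter : v.filter (G.Adj x) ≤ u.filter (G.Adj x) := filter_le_filter_of_count_le hle
  have hdeg : v.countP (G.Adj x) ≤ u.countP (G.Adj x) := by
    simpa only [Multiset.countP_eq_card_filter] using Multiset.card_le_card hfilter
  have hv' : ¬ IsEdgeProduct G.Adj s v := fun hv' => by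
    obtain ⟨k, m, rfl, rfl, hm⟩ := hu.adj_or_exists_cons_twins.resolve_left hu'
    have := h.le_countP_adj hv'
    have := h.countP_adj_le hm
    simp only [Multiset.countP_cons, G.irrefl, h.not_adj, if_false] at hdeg
    omega
  obtain ⟨heq, hlt⟩ :=
    (degLexRank_lt_iff.1 (hvu.resolve_left hv')).resolve_left hdeg.not_gt
  have hfilter : u.filter (G.Adj x) = v.filter (G.Adj x) := by
    refine (Multiset.eq_of_le_of_card_le hfilter ?_).symm
    simpa only [Multiset.countP_eq_card_filter] using heq.ge
  obtain ⟨t, ht, hmin⟩ := exists_of_lexRank_lt hlt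
  obtain ⟨p, hp, hw⟩ := h.exists_exchange hu
    ((h.isEdgeProduct_or_outward hv).resolve_left hv') hfilter ht
  have hnot_adj {z : V} (hz : u.count z ≠ v.count z) : ¬ G.Adj x z := fun hadj => hz <| by
    simpa [hadj] using congrArg (Multiset.count z) hfilter
  refine ⟨t, ht, t ::ₘ u.erase p, ⟨hw, degLexRank_lt_iff.2 (.inr ⟨?_, lexRank_cons_erase_lt
    (hmin p hp)⟩)⟩, Multiset.cons_le_cons t (Multiset.erase_le p u)⟩
  have hpu : p ∈ u := Multiset.count_pos.1 (by omega)
  rw [← Multiset.cons_erase hpu, Multiset.erase_cons_head,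
    Multiset.countP_cons_of_neg _ (hnot_adj ht.ne), Multiset.countP_cons_of_neg _ (hnot_adj hp.ne')]

lemma isLinearQuotientRank_sup_edge {α : Type*} [LinearOrder α] {f : Multiset V → α}
    [DecidablePred (· ∈ {u | IsEdgeProduct G.Adj s u})]
    (hf : IsLinearQuotientRank f {u | IsEdgeProduct G.Adj s u}) :
    IsLinearQuotientRank (fun u => toLex (if u ∈ {u | IsEdgeProduct G.Adj s u} then
        Sum.inl (f u) else Sum.inr (degLexRank (G.Adj x) u)))
      {u | IsEdgeProduct (G ⊔ SimpleGraph.edge x y).Adj s u} := by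
  refine hf.extend (fun u hu => IsEdgeProduct.mono (fun _ _ => .inl) hu)
    degLexRank_injective.injOn fun u hu hu' v hv hvu => ?_
  have hu := (h.isEdgeProduct_or_outward hu).resolve_left hu'
  have hstep : HasLinearStep {w | IsEdgeProduct (OutwardAdj G x y) s w ∧
      degLexRank (G.Adj x) w < degLexRank (G.Adj x) u} u v := by
    by_cases! hz : ∃ z, G.Adj x z ∧ u.count z < v.count z
    · obtain ⟨z, hz, hlt⟩ := hz
      exact h.hasLinearStep_of_count_lt hu hu' hz hlt
    · exact h.hasLinearStep_of_count_le hu hu' hv hvu hz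
  refine hstep.mono ?_
  rintro w ⟨hw, hwu⟩
  exact ⟨hw.mono fun _ _ => h.sup_edge_adj_of_outwardAdj, .inr hwu⟩

end IsTwinCover

theorem HasLinearQuotients.sup_edge {K : Type*} [Field K]
    (hG : HasLinearQuotients (edgeIdeal K G ^ s)) (hs : s ≠ 0) (h : IsTwinCover G x y) :
    HasLinearQuotients (edgeIdeal K (G ⊔ SimpleGraph.edge x y) ^ s) := by
  classical
  obtain ⟨_, -⟩ := exists_wellFoundedLT V
  rw [edgeIdeal_pow] at hG ⊢
  obtain ⟨hfin, f, hf⟩ := hG.exists_isLinearQuotientRank (IsEdgeProduct.isAntichain _ _)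
  exact (h.isLinearQuotientRank_sup_edge hf).hasLinearQuotients (IsEdgeProduct.isAntichain _ _)
    (finite_setOf_isEdgeProduct_sup_edge hs hfin x y)

end SupEdge

lemma expansion_eq {V : Type*} (G : SimpleGraph V) (x : V) :
    expansion G x = G.comap (fun o => o.getD x) ⊔ SimpleGraph.edge (some x) none := by
  ext (_ | a) (_ | b)
  · simp [expansion]
  · simp [expansion, SimpleGraph.edge_adj, or_comm]
  · simp [expansion, SimpleGraph.edge_adj, or_comm, G.adj_comm]
  · simpa [expansion, SimpleGraph.edge_adj, G.adj_comm] using fun hab : G.Adj a b => hab.ne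

lemma finite_preimage_getD {V : Type*} (x v : V) :
    ((fun o : Option V => o.getD x) ⁻¹' {v}).Finite := by
  refine (Set.toFinite {none, some v}).subset ?_
  rintro (_ | a) ha
  · exact .inl rfl
  · exact .inr (congrArg some ha)

/-- if `I(G)^s` has linear quotients for some `s ≥ 1` and `x ∈ V(G)`,
then `I(G^[x])^s` has linear quotients iff the expansion `G^[x]` is gapfree. -/
theorem stmt6 {K : Type*} [Field K] {V : Type*} (G : SimpleGraph V) (x : V)
    (s : ℕ) (hs : 1 ≤ s) (h : HasLinearQuotients ((edgeIdeal K G) ^ s)) :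
    HasLinearQuotients ((edgeIdeal K (expansion G x)) ^ s) ↔ Gapfree (expansion G x) := by
  rw [expansion_eq]
  have hs0 : s ≠ 0 := Nat.one_le_iff_ne_zero.1 hs
  refine ⟨fun hlin => hlin.gapfree hs0, fun hgap => ?_⟩
  have htwin : IsTwinCover (G.comap fun o : Option V => o.getD x) (some x) none :=
    .of_gapfree (Option.some_ne_none x) (fun _ => Iff.rfl) hgap
  exact (h.comap (finite_preimage_getD x)).sup_edge hs0 htwin
end

section
/- For every integer q ≥ 2, the q-th power of the edge ideal of the 5-cycle, I(C_5)^q ⊆ K[a,b,c,d,e], has linear quotients. -/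
open MvPolynomial

/-- The 5-cycle on `Fin 5`. -/
def cycle5 : SimpleGraph (Fin 5) :=
  SimpleGraph.fromRel (fun i j => j = i + 1)

/-!
A generator of `I(C_5)^q` is determined by the multiplicities `t 0, …, t 4` of the edges
`{i, i + 1}` in it, because the cycle is odd. Single out the edge `{0, 1}` and the opposite vertex
`3`: order the generators by decreasing exponent sum at `0` and `1`, then by increasing exponent at
`3`, then by decreasing `t 1 * t 2 + t 2 * t 3 + t 3 * t 4`. Linear quotients amount to an exchange
property: if `s` precedes `t`, then some variable at which the exponent of `s` exceeds that of `t`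
multiplies `t` into the ideal of the generators preceding `t`. Such variables come from
replacing one or two edges. Moving `{1, 2}` to `{0, 1}`, or `{3, 4}` to `{4, 0}`, yields `X 0`;
trading `{0, 1}`, `{3, 4}` for `{1, 2}`, `{4, 0}` yields `X 2`; and so does moving `{3, 4}` to
`{2, 3}` when this increases the third key. The reflection fixing `3` and the edge `{0, 1}` gives
the moves yielding `X 1` and `X 4`. The hypothesis `2 ≤ q` enters when `t` is a product of copies
of `{2, 3}` and `{4, 0}` only: moving one `{2, 3}` to `{3, 4}` then raises the third key from `0`
to `q - 1`.
-/

section LinearQuotients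

variable {K σ ι : Type*} [Field K]

theorem genByVars_colon_span_monomial {A : Set (σ →₀ ℕ)} {w : σ →₀ ℕ}
    (h : ∀ u ∈ A, ∃ i, w i < u i ∧ ∃ v ∈ A, v ≤ w + Finsupp.single i 1) :
    genByVars (Submodule.colon (Ideal.span ((fun v => monomial v (1 : K)) '' A))
      (Ideal.span {monomial w (1 : K)})) := by
  classical
  refine ⟨{i | ∃ v ∈ A, v ≤ w + Finsupp.single i 1}, le_antisymm (fun f hf => ?_) ?_⟩
  · rw [Ideal.mem_colon_span_singleton, mem_ideal_span_monomial_image] at hf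
    refine mem_ideal_span_X_image.2 fun m hm => ?_
    have hmw : m + w ∈ (f * monomial w 1).support := by
      rwa [mem_support_iff, coeff_mul_monomial, mul_one, ← mem_support_iff]
    obtain ⟨u, hu, hle⟩ := hf _ hmw
    obtain ⟨i, hi, hv⟩ := h u hu
    have hui : u i ≤ m i + w i := hle i
    exact ⟨i, hv, by omega⟩
  · rw [Ideal.span_le]
    rintro _ ⟨i, ⟨v, hv, hle⟩, rfl⟩
    refine Ideal.mem_colon_span_singleton.2 (mem_ideal_span_monomial_image.2 fun m hm => ?_)
    simp only [X, monomial_mul, add_comm (Finsupp.single i 1)] at hm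
    exact ⟨v, hv, hle.trans_eq (Finset.mem_singleton.1 (support_monomial_subset hm)).symm⟩

theorem exists_equiv_fin_monotone {α : Type*} [LinearOrder α] (A : Finset ι) (key : ι → α) :
    ∃ e : Fin A.card ≃ A, Monotone fun n => key (e n) :=
  let f : Fin A.card → α := fun n => key (A.equivFin.symm n)
  ⟨(Tuple.sort f).trans A.equivFin.symm, Tuple.monotone_sort f⟩

theorem eq_of_le_of_degree_eq {u v : σ →₀ ℕ} (hle : u ≤ v) (hdeg : u.degree = v.degree) :
    u = v := by
  obtain ⟨w, rfl⟩ := le_iff_exists_add.1 hle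
  have hw : w.degree = 0 := by simpa using hdeg
  rw [(Finsupp.degree_eq_zero_iff w).1 hw, add_zero]

-- Ties in `key` are broken arbitrarily, so an exponent vector is known to precede `d t` only if it
-- is `d s` itself or has a strictly smaller key.
theorem hasLinearQuotients_of_exchange {α : Type*} [LinearOrder α] {A : Finset ι}
    {d : ι → σ →₀ ℕ} {m : ℕ} (key : ι → α) (hinj : Set.InjOn d A)
    (hdeg : ∀ t ∈ A, (d t).degree = m)
    (hexch : ∀ s ∈ A, ∀ t ∈ A, s ≠ t → key s ≤ key t → ∃ i, d t i < d s i ∧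
      ∃ r ∈ A, (r = s ∨ key r < key t) ∧ d r ≤ d t + Finsupp.single i 1) :
    HasLinearQuotients (Ideal.span ((fun t => monomial (d t) (1 : K)) '' A)) := by
  obtain ⟨e, he⟩ := exists_equiv_fin_monotone A key
  refine ⟨A.card, fun n => d (e n), fun i j hij hle => hij ?_, ?_, fun n => ?_⟩
  · have heq : d (e i) = d (e j) :=
      eq_of_le_of_degree_eq hle ((hdeg _ (e i).2).trans (hdeg _ (e j).2).symm)
    exact e.injective (Subtype.ext (hinj (e i).2 (e j).2 heq))
  · rw [Set.image_eq_range]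
    exact congrArg Ideal.span (e.surjective.range_comp fun t => monomial (d t) (1 : K))
  · rw [← Set.image_image (fun v => monomial v (1 : K)) (fun j => d (e j))]
    refine genByVars_colon_span_monomial ?_
    rintro _ ⟨j, hj : j < n, rfl⟩
    obtain ⟨i, hi, r, hr, hrkey, hle⟩ := hexch (e j) (e j).2 (e n) (e n).2
      (fun h => hj.ne (e.injective (Subtype.ext h))) (he hj.le)
    refine ⟨i, hi, d r, ⟨e.symm ⟨r, hr⟩, ?_, by simp⟩, hle⟩
    obtain rfl | hlt := hrkey
    · simpa using hj
    · exact he.reflect_lt (by simpa using hlt)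

end LinearQuotients

theorem span_range_pow_eq {R ι : Type*} [CommSemiring R] [Fintype ι] [DecidableEq ι]
    (f : ι → R) (n : ℕ) :
    Ideal.span (Set.range f) ^ n =
      Ideal.span ((fun t : ι → ℕ => ∏ i, f i ^ t i) ''
        (Finset.univ.piAntidiag n : Finset (ι → ℕ))) := by
  have prod_add_single (t : ι → ℕ) (k : ι) :
      ∏ i, f i ^ (t + (Pi.single k 1 : ι → ℕ)) i = (∏ i, f i ^ t i) * f k := by
    simp only [Pi.add_apply, pow_add, Finset.prod_mul_distrib]
    simp [Pi.single_apply]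
  induction n with
  | zero => simp
  | succ n ih =>
    rw [pow_succ, ih, Ideal.span_mul_span']
    congr 1
    ext p
    constructor
    · rintro ⟨_, ⟨t, ht, rfl⟩, _, ⟨k, rfl⟩, rfl⟩
      have hsum : ∑ i, t i = n := by simpa using ht
      exact ⟨t + Pi.single k 1, by simp [Finset.sum_add_distrib, hsum], prod_add_single t k⟩
    · rintro ⟨t, ht, rfl⟩
      have hsum : ∑ i, t i = n + 1 := by simpa using ht
      obtain ⟨k, -, hk⟩ : ∃ k ∈ Finset.univ, t k ≠ 0 :=
        Finset.exists_ne_zero_of_sum_ne_zero (by omega)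
      obtain ⟨s, rfl⟩ : ∃ s, t = s + Pi.single k 1 := by
        refine ⟨t - Pi.single k 1, (tsub_add_cancel_of_le fun i => ?_).symm⟩
        obtain rfl | hik := eq_or_ne i k
        · simpa [Nat.one_le_iff_ne_zero] using hk
        · simp [hik]
      exact ⟨_, ⟨s, by simpa [Finset.sum_add_distrib] using hsum, rfl⟩, f k, ⟨k, rfl⟩,
        (prod_add_single s k).symm⟩

theorem edgeIdeal_cycle5_eq_span (K : Type*) [Field K] :
    edgeIdeal K cycle5 =
      Ideal.span (Set.range fun i : Fin 5 => (X i * X (i + 1) : MvPolynomial (Fin 5) K)) := by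
  unfold edgeIdeal
  congr 1
  ext m
  constructor
  · rintro ⟨a, b, hab, rfl⟩
    obtain ⟨-, rfl | rfl⟩ := (SimpleGraph.fromRel_adj _ _ _).1 hab
    · exact ⟨a, rfl⟩
    · exact ⟨b, mul_comm _ _⟩
  · rintro ⟨i, rfl⟩
    exact ⟨i, i + 1, (SimpleGraph.fromRel_adj _ _ _).2 ⟨by simp, Or.inl rfl⟩, rfl⟩

/-- The exponent vector of the monomial `∏ i, (X i * X (i + 1)) ^ t i`, a product of edges of the
5-cycle in which the edge `{i, i + 1}` occurs `t i` times. -/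
noncomputable def cycle5Exponent (t : Fin 5 → ℕ) : Fin 5 →₀ ℕ :=
  Finsupp.equivFunOnFinite.symm fun i => t i + t (i - 1)

@[simp]
theorem cycle5Exponent_apply (t : Fin 5 → ℕ) (i : Fin 5) :
    cycle5Exponent t i = t i + t (i - 1) :=
  rfl

-- Overrides `cycle5Exponent_apply`, from which `simp` would produce the stuck index `-1`.
@[simp high]
theorem cycle5Exponent_zero (t : Fin 5 → ℕ) : cycle5Exponent t 0 = t 0 + t 4 :=
  rfl

theorem prod_edge_pow_eq_monomial (K : Type*) [Field K] (t : Fin 5 → ℕ) :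
    ∏ i, (X i * X (i + 1) : MvPolynomial (Fin 5) K) ^ t i = monomial (cycle5Exponent t) 1 := by
  have hshift : ∏ i, (X (i + 1) : MvPolynomial (Fin 5) K) ^ t i = ∏ i, X i ^ t (i - 1) := by
    rw [← Equiv.prod_comp (Equiv.addRight (1 : Fin 5)) fun i => X i ^ t (i - 1)]
    simp
  simp_rw [mul_pow, Finset.prod_mul_distrib, hshift, ← Finset.prod_mul_distrib, ← pow_add]
  rw [monomial_eq, C_1, one_mul, Finsupp.prod_fintype _ _ fun _ => pow_zero _]
  rfl

theorem edgeIdeal_cycle5_pow_eq_span (K : Type*) [Field K] (q : ℕ) :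
    edgeIdeal K cycle5 ^ q = Ideal.span ((fun t => monomial (cycle5Exponent t) (1 : K)) ''
      (Finset.univ.piAntidiag q : Finset (Fin 5 → ℕ))) := by
  simp_rw [edgeIdeal_cycle5_eq_span, span_range_pow_eq, prod_edge_pow_eq_monomial]

theorem cycle5Exponent_injective : Function.Injective cycle5Exponent := by
  intro s t h
  have hcoord (i : Fin 5) : s i + s (i - 1) = t i + t (i - 1) := DFunLike.congr_fun h i
  have h0 : s 0 + s 4 = t 0 + t 4 := hcoord 0
  have h1 : s 1 + s 0 = t 1 + t 0 := hcoord 1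
  have h2 : s 2 + s 1 = t 2 + t 1 := hcoord 2
  have h3 : s 3 + s 2 = t 3 + t 2 := hcoord 3
  have h4 : s 4 + s 3 = t 4 + t 3 := hcoord 4
  ext i
  fin_cases i <;> simp only [Fin.zero_eta, Fin.mk_one, Fin.reduceFinMk] <;> omega

theorem degree_cycle5Exponent (t : Fin 5 → ℕ) : (cycle5Exponent t).degree = 2 * ∑ i, t i := by
  have hshift : ∑ i, t (i - 1) = ∑ i, t i := Equiv.sum_comp (Equiv.subRight (1 : Fin 5)) t
  simp [Finsupp.degree_eq_sum, Finset.sum_add_distrib, hshift, two_mul]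

/-- The key by which the products of edges of the 5-cycle are ordered, smallest first: larger
exponent sum at `0` and `1` first, then smaller exponent at `3`, then larger number of pairs of
consecutive edges on the path `1, 2, 3, 4, 0` that avoids the edge `{0, 1}`. The key is not
injective; ties may be broken arbitrarily. -/
noncomputable def cycle5Key (t : Fin 5 → ℕ) : ℕᵒᵈ ×ₗ ℕ ×ₗ ℕᵒᵈ :=
  toLex (.toDual (cycle5Exponent t 0 + cycle5Exponent t 1),
    toLex (cycle5Exponent t 3, .toDual (t 1 * t 2 + t 2 * t 3 + t 3 * t 4)))

theorem cycle5Key_lt_iff {s t : Fin 5 → ℕ} : cycle5Key s < cycle5Key t ↔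
    cycle5Exponent t 0 + cycle5Exponent t 1 < cycle5Exponent s 0 + cycle5Exponent s 1 ∨
    cycle5Exponent s 0 + cycle5Exponent s 1 = cycle5Exponent t 0 + cycle5Exponent t 1 ∧
      (cycle5Exponent s 3 < cycle5Exponent t 3 ∨ cycle5Exponent s 3 = cycle5Exponent t 3 ∧
        t 1 * t 2 + t 2 * t 3 + t 3 * t 4 < s 1 * s 2 + s 2 * s 3 + s 3 * s 4) := by
  simp only [cycle5Key, Prod.Lex.toLex_lt_toLex, OrderDual.toDual_lt_toDual, OrderDual.toDual_inj]

/-- The variable `i` lies in the colon ideal at the product of edges `t`: the monomial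
`X i * X ^ cycle5Exponent t` is divisible by an earlier generator of the same degree. -/
def CanRaise (t : Fin 5 → ℕ) (i : Fin 5) : Prop :=
  ∃ r, ∑ j, r j = ∑ j, t j ∧ cycle5Key r < cycle5Key t ∧
    cycle5Exponent r ≤ cycle5Exponent t + Finsupp.single i 1

section Reflection

theorem cycle5Exponent_reflect (t : Fin 5 → ℕ) (i : Fin 5) :
    cycle5Exponent (t ∘ Neg.neg) i = cycle5Exponent t (1 - i) := by
  simp only [cycle5Exponent_apply, Function.comp_apply, neg_sub, sub_sub_cancel_left]
  exact add_comm _ _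

theorem cycle5Key_reflect (t : Fin 5 → ℕ) : cycle5Key (t ∘ Neg.neg) = cycle5Key t := by
  have hedge : cycle5Exponent (t ∘ Neg.neg) 0 + cycle5Exponent (t ∘ Neg.neg) 1 =
      cycle5Exponent t 0 + cycle5Exponent t 1 := by
    simp_rw [cycle5Exponent_reflect]
    exact add_comm _ _
  have hthree : cycle5Exponent (t ∘ Neg.neg) 3 = cycle5Exponent t 3 := cycle5Exponent_reflect t 3
  have hpairs : t 4 * t 3 + t 3 * t 2 + t 2 * t 1 = t 1 * t 2 + t 2 * t 3 + t 3 * t 4 := by ring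
  rw [cycle5Key, cycle5Key, hedge, hthree, ← hpairs]
  rfl

theorem sum_reflect (t : Fin 5 → ℕ) : ∑ i, (t ∘ Neg.neg) i = ∑ i, t i :=
  Equiv.sum_comp (Equiv.neg (Fin 5)) t

theorem le_add_single_of_reflect {r t : Fin 5 → ℕ} {i : Fin 5}
    (h : cycle5Exponent (r ∘ Neg.neg) ≤ cycle5Exponent (t ∘ Neg.neg) + Finsupp.single i 1) :
    cycle5Exponent r ≤ cycle5Exponent t + Finsupp.single (1 - i) 1 := by
  intro j
  have hij : 1 - i = j ↔ i = 1 - j := by constructor <;> rintro rfl <;> simp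
  have hj := h (1 - j)
  rw [Finsupp.add_apply, cycle5Exponent_reflect, cycle5Exponent_reflect, sub_sub_cancel,
    Finsupp.single_apply] at hj
  rwa [Finsupp.add_apply, Finsupp.single_apply, if_congr hij rfl rfl]

theorem CanRaise.of_reflect {t : Fin 5 → ℕ} {i : Fin 5} (h : CanRaise (t ∘ Neg.neg) i) :
    CanRaise t (1 - i) := by
  obtain ⟨r, hsum, hkey, hle⟩ := h
  obtain ⟨r, rfl⟩ : ∃ r', r = r' ∘ Neg.neg := ⟨r ∘ Neg.neg, by simp [Function.comp_assoc]⟩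
  rw [sum_reflect, sum_reflect] at hsum
  rw [cycle5Key_reflect, cycle5Key_reflect] at hkey
  exact ⟨r, hsum, hkey, le_add_single_of_reflect hle⟩

end Reflection

section Moves

variable {t : Fin 5 → ℕ}

theorem canRaise_zero (h : 0 < t 1 ∨ 0 < t 3) : CanRaise t 0 := by
  obtain h | h := h
  · refine ⟨![t 0 + 1, t 1 - 1, t 2, t 3, t 4], ?_, cycle5Key_lt_iff.2 ?_, fun i => ?_⟩
    · simp only [Fin.sum_univ_five, Matrix.cons_val]
      omega
    · simp only [cycle5Exponent_apply, Fin.reduceSub, Matrix.cons_val]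
      omega
    · fin_cases i <;> simp <;> omega
  · refine ⟨![t 0, t 1, t 2, t 3 - 1, t 4 + 1], ?_, cycle5Key_lt_iff.2 ?_, fun i => ?_⟩
    · simp only [Fin.sum_univ_five, Matrix.cons_val]
      omega
    · simp
    · fin_cases i <;> simp <;> omega

theorem canRaise_one (h : 0 < t 4 ∨ 0 < t 2) : CanRaise t 1 :=
  (canRaise_zero (t := t ∘ Neg.neg) h).of_reflect

theorem canRaise_two (h0 : 0 < t 0) (h3 : 0 < t 3) : CanRaise t 2 := by
  refine ⟨![t 0 - 1, t 1 + 1, t 2, t 3 - 1, t 4 + 1], ?_, cycle5Key_lt_iff.2 ?_, fun i => ?_⟩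
  · simp only [Fin.sum_univ_five, Matrix.cons_val]
    omega
  · simp only [cycle5Exponent_apply, Fin.reduceSub, Matrix.cons_val]
    omega
  · fin_cases i <;> simp <;> omega

theorem canRaise_four (h0 : 0 < t 0) (h2 : 0 < t 2) : CanRaise t 4 :=
  (canRaise_two (t := t ∘ Neg.neg) h0 h2).of_reflect

theorem canRaise_two_of_lt (h3 : 0 < t 3) (h : t 2 + t 4 + 1 < t 1 + t 3) : CanRaise t 2 := by
  refine ⟨![t 0, t 1, t 2 + 1, t 3 - 1, t 4], ?_, cycle5Key_lt_iff.2 ?_, fun i => ?_⟩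
  · simp only [Fin.sum_univ_five, Matrix.cons_val]
    omega
  · obtain ⟨m, hm⟩ := Nat.exists_eq_add_one_of_ne_zero h3.ne'
    have hpairs : t 1 * t 2 + t 2 * (m + 1) + (m + 1) * t 4 <
        t 1 * (t 2 + 1) + (t 2 + 1) * m + m * t 4 := by linarith
    refine .inr ⟨rfl, .inr ⟨?_, by simpa [hm] using hpairs⟩⟩
    simp only [cycle5Exponent_apply, Fin.reduceSub, Matrix.cons_val]
    omega
  · fin_cases i <;> simp <;> omega

theorem canRaise_four_of_lt (h2 : 0 < t 2) (h : t 3 + t 1 + 1 < t 4 + t 2) : CanRaise t 4 :=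
  (canRaise_two_of_lt (t := t ∘ Neg.neg) h2 h).of_reflect

end Moves

section Exchange

variable {s t : Fin 5 → ℕ}

theorem exists_canRaise_of_lt_zero (hsum : ∑ i, s i = ∑ i, t i) (htwo : 2 ≤ ∑ i, t i)
    (h : cycle5Exponent t 0 < cycle5Exponent s 0) :
    ∃ i, cycle5Exponent t i < cycle5Exponent s i ∧ CanRaise t i := by
  by_cases h13 : 0 < t 1 ∨ 0 < t 3
  · exact ⟨0, h, canRaise_zero h13⟩
  have ht2 : 0 < t 2 := by
    simp only [Fin.sum_univ_five, cycle5Exponent_apply, Fin.reduceSub] at hsum h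
    omega
  by_cases h1 : cycle5Exponent t 1 < cycle5Exponent s 1
  · exact ⟨1, h1, canRaise_one (.inr ht2)⟩
  have h4 : cycle5Exponent t 4 < cycle5Exponent s 4 := by
    simp only [Fin.sum_univ_five, cycle5Exponent_apply, Fin.reduceSub] at hsum h h1 ⊢
    omega
  by_cases ht0 : 0 < t 0
  · exact ⟨4, h4, canRaise_four ht0 ht2⟩
  · rw [Fin.sum_univ_five] at htwo
    exact ⟨4, h4, canRaise_four_of_lt ht2 (by omega)⟩

theorem exists_canRaise_of_lt_one (hsum : ∑ i, s i = ∑ i, t i) (htwo : 2 ≤ ∑ i, t i)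
    (h : cycle5Exponent t 1 < cycle5Exponent s 1) :
    ∃ i, cycle5Exponent t i < cycle5Exponent s i ∧ CanRaise t i := by
  obtain ⟨i, hi, hraise⟩ := exists_canRaise_of_lt_zero (s := s ∘ Neg.neg) (t := t ∘ Neg.neg)
    (by rw [sum_reflect, sum_reflect, hsum]) (by rwa [sum_reflect])
    (by rwa [cycle5Exponent_reflect, cycle5Exponent_reflect])
  rw [cycle5Exponent_reflect, cycle5Exponent_reflect] at hi
  exact ⟨1 - i, hi, hraise.of_reflect⟩

theorem canRaise_two_or_le (hsum : ∑ i, s i = ∑ i, t i) (hkey : cycle5Key s ≤ cycle5Key t)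
    (h0 : cycle5Exponent s 0 = cycle5Exponent t 0) (h1 : cycle5Exponent s 1 = cycle5Exponent t 1)
    (h2 : cycle5Exponent t 2 < cycle5Exponent s 2) :
    CanRaise t 2 ∨ cycle5Exponent s ≤ cycle5Exponent t + Finsupp.single 2 1 := by
  have hcoord := cycle5Key_lt_iff.not.1 hkey.not_gt
  have h3 : cycle5Exponent s 3 ≤ cycle5Exponent t 3 := by omega
  have hpairs : cycle5Exponent s 3 = cycle5Exponent t 3 →
      t 1 * t 2 + t 2 * t 3 + t 3 * t 4 ≤ s 1 * s 2 + s 2 * s 3 + s 3 * s 4 := by omega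
  simp only [Fin.sum_univ_five, cycle5Exponent_apply, Fin.reduceSub] at hsum h0 h1 h2 h3 hpairs
  by_cases ht0 : 0 < t 0
  · exact .inl (canRaise_two ht0 (by omega))
  obtain ⟨k, hk⟩ : ∃ k, s 2 = t 2 + k := ⟨s 2 - t 2, by omega⟩
  have hs1 : s 1 = t 1 := by omega
  have hs4 : s 4 = t 4 := by omega
  have ht3 : t 3 = s 3 + k := by omega
  have hslope : t 2 + t 4 ≤ t 1 + s 3 := by
    rw [hk, hs1, hs4, ht3] at hpairs
    have hmul : k * (t 2 + t 4) ≤ k * (t 1 + s 3) := by linarith [hpairs (by omega)]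
    exact Nat.le_of_mul_le_mul_left hmul (by omega)
  obtain rfl | hk2 : k = 1 ∨ 2 ≤ k := by omega
  · refine .inr fun i => ?_
    fin_cases i <;> simp <;> omega
  · exact .inl (canRaise_two_of_lt (by omega) (by omega))

theorem canRaise_four_or_le (hsum : ∑ i, s i = ∑ i, t i) (hkey : cycle5Key s ≤ cycle5Key t)
    (h0 : cycle5Exponent s 0 = cycle5Exponent t 0) (h1 : cycle5Exponent s 1 = cycle5Exponent t 1)
    (h4 : cycle5Exponent t 4 < cycle5Exponent s 4) :
    CanRaise t 4 ∨ cycle5Exponent s ≤ cycle5Exponent t + Finsupp.single 4 1 := by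
  obtain h | h := canRaise_two_or_le (s := s ∘ Neg.neg) (t := t ∘ Neg.neg)
    (by rw [sum_reflect, sum_reflect, hsum]) (by rwa [cycle5Key_reflect, cycle5Key_reflect])
    (by rwa [cycle5Exponent_reflect, cycle5Exponent_reflect])
    (by rwa [cycle5Exponent_reflect, cycle5Exponent_reflect])
    (by rwa [cycle5Exponent_reflect, cycle5Exponent_reflect])
  · exact .inl h.of_reflect
  · exact .inr (le_add_single_of_reflect (i := 2) h)

theorem exists_canRaise_or_le (hsum : ∑ i, s i = ∑ i, t i) (htwo : 2 ≤ ∑ i, t i) (hne : s ≠ t)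
    (hkey : cycle5Key s ≤ cycle5Key t) :
    ∃ i, cycle5Exponent t i < cycle5Exponent s i ∧
      (CanRaise t i ∨ cycle5Exponent s ≤ cycle5Exponent t + Finsupp.single i 1) := by
  by_cases h0 : cycle5Exponent t 0 < cycle5Exponent s 0
  · obtain ⟨i, hi, hraise⟩ := exists_canRaise_of_lt_zero hsum htwo h0
    exact ⟨i, hi, .inl hraise⟩
  by_cases h1 : cycle5Exponent t 1 < cycle5Exponent s 1
  · obtain ⟨i, hi, hraise⟩ := exists_canRaise_of_lt_one hsum htwo h1
    exact ⟨i, hi, .inl hraise⟩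
  have hcoord := cycle5Key_lt_iff.not.1 hkey.not_gt
  have heq0 : cycle5Exponent s 0 = cycle5Exponent t 0 := by omega
  have heq1 : cycle5Exponent s 1 = cycle5Exponent t 1 := by omega
  have hle3 : cycle5Exponent s 3 ≤ cycle5Exponent t 3 := by omega
  by_cases h2 : cycle5Exponent t 2 < cycle5Exponent s 2
  · exact ⟨2, h2, canRaise_two_or_le hsum hkey heq0 heq1 h2⟩
  have h4 : cycle5Exponent t 4 < cycle5Exponent s 4 := by
    by_contra h4
    have hle : cycle5Exponent s ≤ cycle5Exponent t := by
      intro i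
      fin_cases i
      exacts [heq0.le, heq1.le, not_lt.1 h2, hle3, not_lt.1 h4]
    exact hne (cycle5Exponent_injective (eq_of_le_of_degree_eq hle
      (by rw [degree_cycle5Exponent, degree_cycle5Exponent, hsum])))
  exact ⟨4, h4, canRaise_four_or_le hsum hkey heq0 heq1 h4⟩

end Exchange

/-- for every `q ≥ 2`, `I(C_5)^q` has linear quotients. -/
theorem stmt8 {K : Type*} [Field K] (q : ℕ) (hq : 2 ≤ q) :
    HasLinearQuotients ((edgeIdeal K cycle5) ^ q) := by
  rw [edgeIdeal_cycle5_pow_eq_span]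
  refine hasLinearQuotients_of_exchange (m := 2 * q) cycle5Key cycle5Exponent_injective.injOn
    (fun t ht => ?_) fun s hs t ht hne hkey => ?_
  · rw [degree_cycle5Exponent, (Finset.mem_piAntidiag.1 ht).1]
  · have hs' : ∑ i, s i = q := (Finset.mem_piAntidiag.1 hs).1
    have ht' : ∑ i, t i = q := (Finset.mem_piAntidiag.1 ht).1
    obtain ⟨i, hi, ⟨r, hr, hlt, hle⟩ | hle⟩ :=
      exists_canRaise_or_le (hs'.trans ht'.symm) (hq.trans_eq ht'.symm) hne hkey
    · exact ⟨i, hi, r, by simp [hr, ht'], .inr hlt, hle⟩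
    · exact ⟨i, hi, s, hs, .inl rfl, hle⟩
end

section
/- The graph Γ on 7 vertices {a,b,p,q,x,z,z'} with edges ab, ap, ax, bx, bq, xp, xq, pz, qz, pz', qz' is gapfree and contains a cricket, a diamond, a 4-cycle, and a 5-cycle as induced subgraphs (i.e., Γ is a CDCC graph); moreover, no graph on 6 or fewer vertices has all these properties. -/
/-- `G` contains an induced subgraph isomorphic to `H`. -/
def ContainsInduced {V W : Type*} (G : SimpleGraph V) (H : SimpleGraph W) : Prop :=
  ∃ s : Set V, Nonempty ((G.induce s) ≃g H)

/-- The 4-cycle on `Fin 4`. -/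
def cycle4 : SimpleGraph (Fin 4) :=
  SimpleGraph.fromRel (fun i j => j = i + 1)

/-- The cricket: triangle `cde` with two pendant vertices attached to `c`. -/
def cricket : SimpleGraph (Fin 5) :=
  SimpleGraph.fromRel (fun i j =>
    (i = 0 ∧ j = 2) ∨ (i = 1 ∧ j = 2) ∨ (i = 2 ∧ j = 3) ∨ (i = 2 ∧ j = 4) ∨ (i = 3 ∧ j = 4))

/-- The diamond: `K_4` minus an edge. -/
def diamond : SimpleGraph (Fin 4) :=
  (⊤ : SimpleGraph (Fin 4)).deleteEdges {s(0, 1)}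

/-- A CDCC graph: gapfree, containing a cricket, a diamond, `C_4` and `C_5` as induced
subgraphs. -/
def IsCDCC {V : Type*} (G : SimpleGraph V) : Prop :=
  Gapfree G ∧ ContainsInduced G cricket ∧ ContainsInduced G diamond ∧
    ContainsInduced G cycle4 ∧ ContainsInduced G cycle5

/-- The graph `Γ` on 7 vertices (`a=0, b=1, p=2, q=3, x=4, z=5, z'=6`) with edges
`ab, ap, ax, bx, bq, xp, xq, pz, qz, pz', qz'`. -/
def gamma7 : SimpleGraph (Fin 7) :=
  SimpleGraph.fromRel (fun i j =>
    (i = 0 ∧ j = 1) ∨ (i = 0 ∧ j = 2) ∨ (i = 0 ∧ j = 4) ∨ (i = 1 ∧ j = 4) ∨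
    (i = 1 ∧ j = 3) ∨ (i = 4 ∧ j = 2) ∨ (i = 4 ∧ j = 3) ∨ (i = 2 ∧ j = 5) ∨
    (i = 3 ∧ j = 5) ∨ (i = 2 ∧ j = 6) ∨ (i = 3 ∧ j = 6))

/-!
Deleting any vertex of a 5-cycle leaves an induced path on four vertices, and the cricket contains
no such path: its centre is adjacent to every other vertex, and only one edge avoids the centre.
So, in a graph containing both, at least two vertices of the 5-cycle lie outside the cricket, which
makes at least `5 + 2` vertices in all.
-/

open SimpleGraph

universe u

section InducedSubgraph

variable {U V W X : Type*} {F : SimpleGraph U} {G : SimpleGraph V} {H : SimpleGraph W}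
  {P : SimpleGraph X}

theorem containsInduced_iff_isIndContained : ContainsInduced G H ↔ H ⊴ G := by
  rw [isIndContained_iff_exists_iso_induce]
  exact exists_congr fun _ ↦ ⟨.map Iso.symm, .map Iso.symm⟩

theorem isIndContained_of_range_subset (f : F ↪g G) (g : H ↪g G)
    (h : Set.range f ⊆ Set.range g) : F ⊴ H := by
  have hmem (u : U) : f u ∈ Set.range g := h ⟨u, rfl⟩
  exact ⟨g.isoInduceRange.symm.toEmbedding.comp
    ⟨⟨fun u ↦ ⟨f u, hmem u⟩, fun _ _ huv ↦ f.injective (congrArg Subtype.val huv)⟩, f.map_adj_iff⟩⟩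

theorem nontrivial_compl_range_of_not_isIndContained [Nonempty U]
    (hF : ∀ u, P ⊴ F.induce {u}ᶜ) (hP : ¬ P ⊴ H) (f : F ↪g G) (g : H ↪g G) :
    (Set.range g)ᶜ.Nontrivial := by
  by_contra hsub
  rw [Set.not_nontrivial_iff] at hsub
  obtain ⟨u, hu⟩ : ∃ u, ∀ v ≠ u, f v ∈ Set.range g := by
    by_cases hout : ∃ u, f u ∉ Set.range g
    · obtain ⟨u, hu⟩ := hout
      exact ⟨u, fun v hvu ↦ by_contra fun hv ↦ hvu (f.injective (hsub hv hu))⟩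
    · push Not at hout
      exact ⟨Classical.arbitrary U, fun v _ ↦ hout v⟩
  have hFH : F.induce {u}ᶜ ⊴ H := by
    refine isIndContained_of_range_subset (f.comp (Embedding.induce {u}ᶜ)) g ?_
    rintro _ ⟨⟨v, hv⟩, rfl⟩
    exact hu v hv
  exact hP ((hF u).trans hFH)

theorem card_add_two_le_of_not_isIndContained [Nonempty U]
    (hF : ∀ u, P ⊴ F.induce {u}ᶜ) (hP : ¬ P ⊴ H) (hFG : F ⊴ G) (hHG : H ⊴ G) :
    ENat.card W + 2 ≤ ENat.card V := by
  obtain ⟨f⟩ := hFG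
  obtain ⟨g⟩ := hHG
  have hcompl : 2 ≤ (Set.range g)ᶜ.encard := by
    have hone := Set.one_lt_encard_iff_nontrivial.2
      (nontrivial_compl_range_of_not_isIndContained hF hP f g)
    simpa only [one_add_one_eq_two] using Order.add_one_le_of_lt hone
  calc
    ENat.card W + 2 ≤ (Set.range g).encard + (Set.range g)ᶜ.encard := by
      gcongr
      exact g.injective.encard_range
    _ = ENat.card V := by rw [Set.encard_add_encard_compl, Set.encard_univ]

end InducedSubgraph

theorem Gapfree.of_adj_or_adj {V : Type*} {G : SimpleGraph V}
    (h : ∀ a b c d, G.Adj a b → G.Adj c d →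
      G.Adj a c ∨ G.Adj a d ∨ G.Adj b c ∨ G.Adj b d) : Gapfree G := by
  intro a b c d hab hcd _
  rcases h a b c d hab hcd with h | h | h | h
  · exact ⟨a, c, h, ⟨a, by simp⟩, ⟨c, by simp⟩⟩
  · exact ⟨a, d, h, ⟨a, by simp⟩, ⟨d, by simp⟩⟩
  · exact ⟨b, c, h, ⟨b, by simp⟩, ⟨c, by simp⟩⟩
  · exact ⟨b, d, h, ⟨b, by simp⟩, ⟨d, by simp⟩⟩

theorem cycle5_eq_cycleGraph : cycle5 = cycleGraph 5 := by
  ext i j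
  simp only [cycle5, fromRel_adj, cycleGraph_adj]
  revert i j
  decide

theorem val_succ_sub_succ_eq_one_iff {n : ℕ} {i j : Fin n} :
    (i.succ - j.succ).val = 1 ↔ j.val + 1 = i.val := by
  rcases le_or_gt j i with hji | hij
  · rw [Fin.sub_val_of_le (Fin.succ_le_succ_iff.2 hji), Fin.val_succ, Fin.val_succ]
    omega
  · rw [Fin.coe_sub_iff_lt.2 (Fin.succ_lt_succ_iff.2 hij), Fin.val_succ, Fin.val_succ]
    omega

theorem pathGraph_isIndContained_induce_compl_singleton_cycleGraph {n : ℕ} (u : Fin (n + 1)) :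
    pathGraph n ⊴ (cycleGraph (n + 1)).induce {u}ᶜ := by
  have hne (i : Fin n) : u + i.succ ≠ u := by simp
  have hinj : Function.Injective fun i : Fin n ↦ u + i.succ :=
    (add_right_injective u).comp (Fin.succ_injective n)
  have hadj (i j : Fin n) :
      (cycleGraph (n + 1)).Adj (u + i.succ) (u + j.succ) ↔ (pathGraph n).Adj i j := by
    simp only [cycleGraph_adj', add_sub_add_left_eq_sub, val_succ_sub_succ_eq_one_iff,
      pathGraph_adj, or_comm]
  exact ⟨⟨⟨fun i ↦ ⟨u + i.succ, hne i⟩, fun _ _ hij ↦ hinj (congrArg Subtype.val hij)⟩, hadj _ _⟩⟩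

instance : DecidableRel cricket.Adj := inferInstanceAs (DecidableRel (fromRel _).Adj)

theorem not_pathGraph_four_isIndContained_cricket : ¬ pathGraph 4 ⊴ cricket := by
  rintro ⟨f⟩
  have hcentre (v : Fin 4) : f v ≠ 2 := by
    intro hv
    obtain ⟨w, hwv, hadj⟩ : ∃ w ≠ v, ¬ (pathGraph 4).Adj v w := by
      clear hv
      simp only [pathGraph_adj]
      decide +revert
    have hdom : ∀ i ≠ 2, cricket.Adj 2 i := by decide
    exact hadj (f.map_adj_iff.1 (hv ▸ hdom (f w) (hv ▸ f.injective.ne hwv)))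
  have hedge : ∀ i j, cricket.Adj i j → i ≠ 2 → j ≠ 2 → i = 3 ∨ i = 4 := by decide
  have hrange (v : Fin 4) : f v = 3 ∨ f v = 4 := by
    obtain ⟨w, hvw⟩ : ∃ w, (pathGraph 4).Adj v w := by
      simp only [pathGraph_adj]
      decide +revert
    exact hedge _ _ (f.map_adj_iff.2 hvw) (hcentre v) (hcentre w)
  have h01 : f 0 ≠ f 1 := f.injective.ne (by decide)
  have h02 : f 0 ≠ f 2 := f.injective.ne (by decide)
  have h12 : f 1 ≠ f 2 := f.injective.ne (by decide)
  grind

theorem seven_le_card_of_cricket_of_cycle5 {V : Type*} {G : SimpleGraph V}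
    (hcricket : ContainsInduced G cricket) (hcycle : ContainsInduced G cycle5) :
    7 ≤ ENat.card V := by
  rw [containsInduced_iff_isIndContained] at hcricket hcycle
  rw [cycle5_eq_cycleGraph] at hcycle
  have hcard := card_add_two_le_of_not_isIndContained
    pathGraph_isIndContained_induce_compl_singleton_cycleGraph
    not_pathGraph_four_isIndContained_cricket hcycle hcricket
  calc
    (7 : ℕ∞) = ENat.card (Fin 5) + 2 := by
      rw [ENat.card_eq_coe_fintype_card, Fintype.card_fin]
      rfl
    _ ≤ ENat.card V := hcard

instance : DecidableRel gamma7.Adj := inferInstanceAs (DecidableRel (fromRel _).Adj)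

instance : DecidableRel diamond.Adj := inferInstanceAs (DecidableRel (deleteEdges _ _).Adj)

instance : DecidableRel cycle4.Adj := inferInstanceAs (DecidableRel (fromRel _).Adj)

instance : DecidableRel cycle5.Adj := inferInstanceAs (DecidableRel (fromRel _).Adj)

theorem isCDCC_gamma7 : IsCDCC gamma7 := by
  simp only [IsCDCC, containsInduced_iff_isIndContained]
  -- In the notation of `gamma7`, the witnesses are `z z' p a x`, `b p a x`, `p z q z'` and
  -- `a b q z p`.
  refine ⟨.of_adj_or_adj (by decide +kernel), ?_, ?_, ?_, ?_⟩
  · exact ⟨⟨⟨![5, 6, 2, 0, 4], by decide⟩, by decide +kernel⟩⟩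
  · exact ⟨⟨⟨![1, 2, 0, 4], by decide⟩, by decide +kernel⟩⟩
  · exact ⟨⟨⟨![2, 5, 3, 6], by decide⟩, by decide +kernel⟩⟩
  · exact ⟨⟨⟨![0, 1, 3, 5, 2], by decide⟩, by decide +kernel⟩⟩

theorem stmt15_general :
    IsCDCC gamma7 ∧ ∀ {V : Type u} (H : SimpleGraph V),
      ContainsInduced H cricket → ContainsInduced H cycle5 → 7 ≤ ENat.card V :=
  ⟨isCDCC_gamma7, fun _ ↦ seven_le_card_of_cricket_of_cycle5⟩

/-- `gamma7` is a CDCC graph, and no graph on 6 or fewer vertices is a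
CDCC graph. -/
theorem stmt15 :
    IsCDCC gamma7 ∧ ∀ n : ℕ, n ≤ 6 → ∀ H : SimpleGraph (Fin n), ¬ IsCDCC H := by
  refine ⟨stmt15_general.{0}.1, fun n hn H ⟨_, hcricket, _, _, hcycle⟩ ↦
    (Nat.lt_succ_of_le hn).not_ge ?_⟩
  simpa using stmt15_general.2 H hcricket hcycle
end
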